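/- Let Ω ⊂ ℂ be a bounded domain containing 0 whose boundary is an analytic Jordan curve, and let u be a negative continuous subharmonic exhaustion of Ω with finite Monge–Ampère mass. Then H^p_u(Ω) ⊂ H^p(Ω) and the inclusion map H^p_u(Ω) → H^p(Ω) is continuous between the normed spaces; moreover, if H^p_u(Ω) ≠ H^p(Ω), then the image of this inclusion is not a closed subspace of H^p(Ω) (since it contains all bounded holomorphic functions, which are dense in H^p(Ω)). -/

import Mathlib

open MeasureTheory Filter Metric Complex Set
open scoped Real ENNReal Topology

noncomputable section

/-- The Laplacian of a real-valued function on `ℂ ≅ ℝ²`. -/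
def lap (φ : ℂ → ℝ) (z : ℂ) : ℝ :=
  fderiv ℝ (fun w => fderiv ℝ φ w 1) z 1 +
    fderiv ℝ (fun w => fderiv ℝ φ w Complex.I) z Complex.I

/-- `h` is harmonic on `s`. -/
def HarmonicOn (h : ℂ → ℝ) (s : Set ℂ) : Prop :=
  ContDiffOn ℝ 2 h s ∧ ∀ z ∈ s, lap h z = 0

/-- `u` is subharmonic on `s` (continuous with the sub-mean-value property). -/
def SubharmonicOn (u : ℂ → ℝ) (s : Set ℂ) : Prop :=
  ContinuousOn u s ∧ ∀ z ∈ s, ∀ r : ℝ, 0 < r → closedBall z r ⊆ s →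
    u z ≤ (2 * Real.pi)⁻¹ *
      ∫ t in (0:ℝ)..(2 * Real.pi), u (z + (r : ℂ) * Complex.exp ((t : ℂ) * Complex.I))

/-- `u` is a negative continuous subharmonic exhaustion function for `Ω`:
sublevel sets `{u < c}`, `c < 0`, are relatively compact in `Ω`. -/
structure IsExhaustion (u : ℂ → ℝ) (Ω : Set ℂ) : Prop where
  neg : ∀ z ∈ Ω, u z < 0
  subh : SubharmonicOn u Ω
  exh : ∀ c : ℝ, c < 0 → IsCompact (closure {z | z ∈ Ω ∧ u z < c}) ∧
    closure {z | z ∈ Ω ∧ u z < c} ⊆ Ω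

/-- `ν` is the Riesz measure `dd^c u = (1/4) Δu dA` of `u` on `Ω`, characterized
distributionally: `∫ φ dν = (1/4) ∫_Ω u Δφ dA` for test functions `φ`. -/
def IsRieszMeasure (u : ℂ → ℝ) (Ω : Set ℂ) (ν : Measure ℂ) : Prop :=
  ν Ωᶜ = 0 ∧
  ∀ φ : ℂ → ℝ, ContDiff ℝ 2 φ → HasCompactSupport φ → tsupport φ ⊆ Ω →
    ∫ z, φ z ∂ν = (4 : ℝ)⁻¹ * ∫ z in Ω, u z * lap φ z

/-- `μ` is the Monge–Ampère measure `μ_{u,r} = dd^c max(u,r) - χ_{Ω∖{u<r}} dd^c u`,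
where `ν = dd^c u`. -/
def IsMAMeasure (u : ℂ → ℝ) (Ω : Set ℂ) (ν : Measure ℂ) (r : ℝ) (μ : Measure ℂ) : Prop :=
  ∃ νr : Measure ℂ, IsRieszMeasure (fun z => max (u z) r) Ω νr ∧
    μ = νr - ν.restrict {z | z ∈ Ω ∧ r ≤ u z}

/-- The `p`-th power of the Poletsky–Stessin Hardy "norm",
`limsup_{r→0⁻} ∫ |f|^p dμ_{u,r}`. -/
def psNormPow (p : ℝ) (μfam : ℝ → Measure ℂ) (f : ℂ → ℂ) : ℝ≥0∞ :=
  Filter.limsup (fun r => ∫⁻ z, ENNReal.ofReal (‖f z‖ ^ p) ∂(μfam r))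
    (nhdsWithin 0 (Set.Iio 0))

/-- The Poletsky–Stessin Hardy norm. -/
def psNorm (p : ℝ) (μfam : ℝ → Measure ℂ) (f : ℂ → ℂ) : ℝ≥0∞ :=
  psNormPow p μfam f ^ (1 / p)

/-- Membership in the Poletsky–Stessin Hardy space `H^p_u(Ω)`, where `μfam r = μ_{u,r}`. -/
def MemPS (p : ℝ) (Ω : Set ℂ) (μfam : ℝ → Measure ℂ) (f : ℂ → ℂ) : Prop :=
  DifferentiableOn ℂ f Ω ∧ psNormPow p μfam f < ⊤

/-- Membership in the classical Hardy space `H^p(Ω)`: `|f|^p` has a harmonic majorant. -/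
def MemHClassical (p : ℝ) (Ω : Set ℂ) (f : ℂ → ℂ) : Prop :=
  DifferentiableOn ℂ f Ω ∧
    ∃ h : ℂ → ℝ, HarmonicOn h Ω ∧ ∀ z ∈ Ω, ‖f z‖ ^ p ≤ h z

/-- A bounded domain in `ℂ` containing `0` whose boundary is an analytic Jordan curve:
there is a conformal map of the unit disc onto `Ω` extending analytically and injectively
across the closed disc, carrying the unit circle onto the boundary of `Ω`. -/
structure AnalyticJordanDomain (Ω : Set ℂ) : Prop where
  isOpen : IsOpen Ω
  isConnected : IsConnected Ω
  isBounded : Bornology.IsBounded Ω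
  zero_mem : (0:ℂ) ∈ Ω
  analyticBoundary : ∃ (U : Set ℂ) (ψ : ℂ → ℂ), IsOpen U ∧ closedBall (0:ℂ) 1 ⊆ U ∧
    DifferentiableOn ℂ ψ U ∧ Set.InjOn ψ U ∧ ψ '' ball (0:ℂ) 1 = Ω ∧
    ψ '' sphere (0:ℂ) 1 = frontier Ω

/-- `μ` is the boundary Monge–Ampère measure: the weak* limit of the measures
`μfam r = μ_{u,r}` as `r → 0⁻`. -/
def IsBoundaryMA (μfam : ℝ → Measure ℂ) (μ : Measure ℂ) : Prop :=
  ∀ φ : ℂ → ℝ, Continuous φ →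
    Filter.Tendsto (fun r => ∫ z, φ z ∂(μfam r)) (nhdsWithin 0 (Set.Iio 0))
      (nhds (∫ z, φ z ∂μ))

/-- `f` has nontangential limit `L` at the boundary point `ξ` of `Ω`. -/
def NTLim (Ω : Set ℂ) (f : ℂ → ℂ) (ξ : ℂ) (L : ℂ) : Prop :=
  ∀ C : ℝ, 1 < C →
    Filter.Tendsto f
      (nhdsWithin ξ {z | z ∈ Ω ∧ dist z ξ ≤ C * infDist z (frontier Ω)}) (nhds L)

/-- Arc length measure on the boundary of `Ω` (1-dimensional Hausdorff measure). -/
def arcLen (Ω : Set ℂ) : Measure ℂ := (μH[1] : Measure ℂ).restrict (frontier Ω)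


/-- `h` is the least harmonic majorant of `|f|^p` on `Ω`; the classical Hardy norm of `f`
is `(h 0)^{1/p}`. -/
def IsLeastHarmMaj (p : ℝ) (Ω : Set ℂ) (f : ℂ → ℂ) (h : ℂ → ℝ) : Prop :=
  HarmonicOn h Ω ∧ (∀ z ∈ Ω, ‖f z‖ ^ p ≤ h z) ∧
    ∀ h' : ℂ → ℝ, HarmonicOn h' Ω → (∀ z ∈ Ω, ‖f z‖ ^ p ≤ h' z) →
      ∀ z ∈ Ω, h z ≤ h' z


/-- second directional derivative -/
def D2 (e : ℂ) (φ : ℂ → ℝ) (z : ℂ) : ℝ := fderiv ℝ (fun w => fderiv ℝ φ w e) z e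

lemma lap_eq_D2 (φ : ℂ → ℝ) (z : ℂ) : lap φ z = D2 1 φ z + D2 Complex.I φ z := rfl

lemma D2_congr {e : ℂ} {φ χ : ℂ → ℝ} {z : ℂ} (h : φ =ᶠ[𝓝 z] χ) : D2 e φ z = D2 e χ z := by
  unfold D2
  have : (fun w => fderiv ℝ φ w e) =ᶠ[𝓝 z] (fun w => fderiv ℝ χ w e) := by
    filter_upwards [h.fderiv (𝕜 := ℝ)] with w hw
    rw [hw]
  rw [this.fderiv_eq]

lemma lap_congr {φ χ : ℂ → ℝ} {z : ℂ} (h : φ =ᶠ[𝓝 z] χ) : lap φ z = lap χ z := by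
  rw [lap_eq_D2, lap_eq_D2, D2_congr h, D2_congr h]

lemma D2_eq {e : ℂ} {φ d : ℂ → ℝ} {d' : ℂ →L[ℝ] ℝ} {z : ℂ}
    (h : ∀ᶠ w in 𝓝 z, fderiv ℝ φ w e = d w) (hd : HasFDerivAt d d' z) :
    D2 e φ z = d' e := by
  unfold D2
  have : (fun w => fderiv ℝ φ w e) =ᶠ[𝓝 z] d := h
  rw [this.fderiv_eq, hd.fderiv]

lemma evdiff {φ : ℂ → ℝ} {z : ℂ} (h : ContDiffAt ℝ 2 φ z) :
    ∀ᶠ w in 𝓝 z, DifferentiableAt ℝ φ w := by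
  filter_upwards [h.eventually (by simp)] with w hw
  exact hw.differentiableAt (by simp)

lemma diff_fderiv {φ : ℂ → ℝ} {z : ℂ} (h : ContDiffAt ℝ 2 φ z) (e : ℂ) :
    DifferentiableAt ℝ (fun w => fderiv ℝ φ w e) z := by
  have h1 : ContDiffAt ℝ 1 (fderiv ℝ φ) z := h.fderiv_right (by norm_num)
  have h2 : DifferentiableAt ℝ (fderiv ℝ φ) z := h1.differentiableAt (by simp)
  exact h2.clm_apply (differentiableAt_const e)

lemma D2_add {e : ℂ} {φ χ : ℂ → ℝ} {z : ℂ} (h : ContDiffAt ℝ 2 φ z) (h' : ContDiffAt ℝ 2 χ z) :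
    D2 e (fun w => φ w + χ w) z = D2 e φ z + D2 e χ z := by
  rw [D2_eq (d := fun w => fderiv ℝ φ w e + fderiv ℝ χ w e) _
    ((diff_fderiv h e).hasFDerivAt.add (diff_fderiv h' e).hasFDerivAt)]
  · rfl
  · filter_upwards [evdiff h, evdiff h'] with w h1 h2
    rw [show (fun w => φ w + χ w) = φ + χ from rfl, fderiv_add h1 h2]; rfl

lemma D2_sub {e : ℂ} {φ χ : ℂ → ℝ} {z : ℂ} (h : ContDiffAt ℝ 2 φ z) (h' : ContDiffAt ℝ 2 χ z) :
    D2 e (fun w => φ w - χ w) z = D2 e φ z - D2 e χ z := by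
  rw [D2_eq (d := fun w => fderiv ℝ φ w e - fderiv ℝ χ w e) _
    ((diff_fderiv h e).hasFDerivAt.sub (diff_fderiv h' e).hasFDerivAt)]
  · rfl
  · filter_upwards [evdiff h, evdiff h'] with w h1 h2
    rw [show (fun w => φ w - χ w) = φ - χ from rfl, fderiv_sub h1 h2]; rfl

lemma D2_comp {e : ℂ} {g : ℂ → ℝ} {z : ℂ} (hg : ContDiffAt ℝ 2 g z) {k k' : ℝ → ℝ} {k2 : ℝ}
    (h1 : ∀ᶠ t in 𝓝 (g z), HasDerivAt k (k' t) t) (h2 : HasDerivAt k' k2 (g z)) :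
    D2 e (fun w => k (g w)) z = k2 * (fderiv ℝ g z e)^2 + k' (g z) * D2 e g z := by
  have hgd : DifferentiableAt ℝ g z := hg.differentiableAt (by simp)
  have a1 : HasFDerivAt (fun w => k' (g w)) (k2 • fderiv ℝ g z) z :=
    h2.comp_hasFDerivAt z hgd.hasFDerivAt
  rw [D2_eq (d := fun w => k' (g w) * fderiv ℝ g w e) _
    (a1.mul (diff_fderiv hg e).hasFDerivAt)]
  · simp only [_root_.add_apply, _root_.smul_apply, smul_eq_mul, D2]
    ring
  · filter_upwards [hgd.continuousAt.eventually h1, evdiff hg] with w hw hw2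
    have := (hw.comp_hasFDerivAt w hw2.hasFDerivAt).fderiv
    simp only [Function.comp_def] at this
    rw [this]; simp

lemma hasFDerivAt_re {f : ℂ → ℂ} {z f' : ℂ} (h : HasDerivAt f f' z) :
    HasFDerivAt (fun w => (f w).re)
      (Complex.reCLM.comp ((ContinuousLinearMap.toSpanSingleton ℂ f').restrictScalars ℝ)) z := by
  have := h.hasFDerivAt.restrictScalars ℝ
  exact Complex.reCLM.hasFDerivAt.comp z this

lemma fderiv_re_hol {f : ℂ → ℂ} {z : ℂ} (h : DifferentiableAt ℂ f z) (e : ℂ) :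
    fderiv ℝ (fun w => (f w).re) z e = (e * deriv f z).re := by
  rw [(hasFDerivAt_re h.hasDerivAt).fderiv]; simp

lemma D2_re_hol {f : ℂ → ℂ} {z : ℂ} (h : AnalyticAt ℂ f z) (e : ℂ) :
    D2 e (fun w => (f w).re) z = (e^2 * deriv (deriv f) z).re := by
  have h2 : HasDerivAt (fun w => e * deriv f w) (e * deriv (deriv f) z) z :=
    (h.deriv.differentiableAt.hasDerivAt).const_mul e
  rw [D2_eq (d := fun w => (e * deriv f w).re) _ (hasFDerivAt_re h2)]
  · simp [pow_two]; ring
  · filter_upwards [h.eventually_analyticAt] with w hw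
    exact fderiv_re_hol hw.differentiableAt e

lemma contDiffAt_re_hol {f : ℂ → ℂ} {z : ℂ} (h : AnalyticAt ℂ f z) {n : WithTop ℕ∞} :
    ContDiffAt ℝ n (fun w => (f w).re) z := by
  have := h.contDiffAt (n := n)
  exact Complex.reCLM.contDiff.contDiffAt.comp z (this.restrict_scalars ℝ)

lemma lap_re_hol {f : ℂ → ℂ} {z : ℂ} (h : AnalyticAt ℂ f z) :
    lap (fun w => (f w).re) z = 0 := by
  rw [lap_eq_D2, D2_re_hol h, D2_re_hol h]; simp

lemma im_eq_re (f : ℂ → ℂ) : (fun w => (f w).im) = (fun w => (-Complex.I * f w).re) := by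
  ext w; simp

lemma fderiv_sq_re {f : ℂ → ℂ} {z : ℂ} (h : AnalyticAt ℂ f z) (e : ℂ) :
    fderiv ℝ (fun w => (f w).re ^ 2) z e = 2 * (f z).re * (e * deriv f z).re := by
  have := ((hasFDerivAt_re h.differentiableAt.hasDerivAt).pow 2).fderiv
  rw [this]; simp

lemma normSq_split (f : ℂ → ℂ) : (fun w => ‖f w‖^2) =
    (fun w => (f w).re ^ 2 + (-Complex.I * f w).re ^ 2) := by
  ext w; rw [← Complex.normSq_eq_norm_sq, Complex.normSq_apply]; simp; ring

lemma D2_sq_re {f : ℂ → ℂ} {z : ℂ} (h : AnalyticAt ℂ f z) (e : ℂ) :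
    D2 e (fun w => (f w).re ^ 2) z =
      2 * (e * deriv f z).re ^ 2 + 2 * (f z).re * (e^2 * deriv (deriv f) z).re := by
  have := D2_comp (e := e) (g := fun w => (f w).re) (z := z) (k := fun t => t^2)
    (k' := fun t => 2 * t) (k2 := 2) (contDiffAt_re_hol h)
    (Eventually.of_forall fun t => by simpa using hasDerivAt_pow 2 t)
    (by simpa using (hasDerivAt_id ((f z).re)).const_mul 2)
  rw [this, D2_re_hol h, fderiv_re_hol h.differentiableAt]

lemma deriv_mI {f : ℂ → ℂ} {z : ℂ} (h : AnalyticAt ℂ f z) :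
    deriv (fun w => -Complex.I * f w) =ᶠ[𝓝 z] fun w => -Complex.I * deriv f w := by
  filter_upwards [h.eventually_analyticAt] with w hw
  exact (hw.differentiableAt.hasDerivAt.const_mul _).deriv

lemma deriv2_mI {f : ℂ → ℂ} {z : ℂ} (h : AnalyticAt ℂ f z) :
    deriv (deriv (fun w => -Complex.I * f w)) z = -Complex.I * deriv (deriv f) z := by
  rw [(deriv_mI h).deriv_eq]
  exact (h.deriv.differentiableAt.hasDerivAt.const_mul _).deriv

lemma contDiffAt_normSq {f : ℂ → ℂ} {z : ℂ} (h : AnalyticAt ℂ f z) {n : WithTop ℕ∞} :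
    ContDiffAt ℝ n (fun w => ‖f w‖^2) z := by
  rw [normSq_split]
  exact ((contDiffAt_re_hol h).pow 2).add
    ((contDiffAt_re_hol (analyticAt_const.mul h)).pow 2)

lemma D2_normSq {f : ℂ → ℂ} {z : ℂ} (h : AnalyticAt ℂ f z) (e : ℂ) :
    D2 e (fun w => ‖f w‖^2) z =
      2 * ‖e * deriv f z‖ ^ 2 + 2 * ((f z).re * (e^2 * deriv (deriv f) z).re
        + (f z).im * (e^2 * deriv (deriv f) z).im) := by
  have h' : AnalyticAt ℂ (fun w => -Complex.I * f w) z := analyticAt_const.mul h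
  rw [normSq_split, D2_add ((contDiffAt_re_hol h).pow 2) ((contDiffAt_re_hol h').pow 2),
    D2_sq_re h, D2_sq_re h', deriv2_mI h, (deriv_mI h).self_of_nhds,
    ← Complex.normSq_eq_norm_sq, Complex.normSq_apply]
  simp [pow_two]
  ring

lemma fderiv_normSq {f : ℂ → ℂ} {z : ℂ} (h : AnalyticAt ℂ f z) (e : ℂ) :
    fderiv ℝ (fun w => ‖f w‖^2) z e =
      2 * ((f z).re * (e * deriv f z).re + (f z).im * (e * deriv f z).im) := by
  have h' : AnalyticAt ℂ (fun w => -Complex.I * f w) z := analyticAt_const.mul h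
  rw [normSq_split, show (fun w => (f w).re ^ 2 + (-Complex.I * f w).re ^ 2) =
    (fun w => (f w).re ^ 2) + (fun w => (-Complex.I * f w).re ^ 2) from rfl,
    fderiv_add (((contDiffAt_re_hol h (n := 1)).pow 2).differentiableAt (by simp))
     (((contDiffAt_re_hol h' (n := 1)).pow 2).differentiableAt (by simp)),
    _root_.add_apply, fderiv_sq_re h, fderiv_sq_re h', (deriv_mI h).self_of_nhds]
  simp
  ring

/-- regularised `|f|^p` -/
def Phi (p ε : ℝ) (f : ℂ → ℂ) (z : ℂ) : ℝ := (‖f z‖^2 + ε) ^ (p/2)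

lemma contDiffAt_Phi {p ε : ℝ} (hε : 0 < ε) {f : ℂ → ℂ} {z : ℂ} (h : AnalyticAt ℂ f z) :
    ContDiffAt ℝ 2 (Phi p ε f) z := by
  unfold Phi
  exact ((contDiffAt_normSq h).add contDiffAt_const).rpow_const_of_ne (by positivity)

lemma lap_Phi_nonneg {p ε : ℝ} (hp : 0 < p) (hε : 0 < ε) {f : ℂ → ℂ} {z : ℂ}
    (h : AnalyticAt ℂ f z) : 0 ≤ lap (Phi p ε f) z := by
  set q := p/2 with hq
  have hq0 : 0 < q := by positivity
  set N := ‖f z‖^2 with hN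
  have hN0 : 0 ≤ N := by positivity
  have hs : 0 < N + ε := by positivity
  have key : ∀ e : ℂ, D2 e (Phi p ε f) z =
      (q * (q-1) * (N + ε) ^ (q-2)) * (fderiv ℝ (fun w => ‖f w‖^2) z e)^2
        + (q * (N+ε)^(q-1)) * D2 e (fun w => ‖f w‖^2) z := by
    intro e
    refine D2_comp (k := fun t => (t+ε)^q) (k' := fun t => q * (t+ε)^(q-1))
      (contDiffAt_normSq h) ?_ ?_
    · have : ∀ᶠ t in 𝓝 N, 0 < t + ε := by
        have : Continuous fun t : ℝ => t + ε := by fun_prop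
        exact this.continuousAt.eventually (lt_mem_nhds hs)
      filter_upwards [this] with t ht
      have := ((hasDerivAt_id t).add_const ε).rpow_const (p := q) (Or.inl ht.ne')
      simpa using this
    · have := (((hasDerivAt_id N).add_const ε).rpow_const (p := q-1) (Or.inl hs.ne')).const_mul q
      refine this.congr_deriv ?_
      simp only [id, one_mul]
      rw [show q - 1 - 1 = q - 2 by ring]; ring
  rw [lap_eq_D2, key, key, fderiv_normSq h, fderiv_normSq h, D2_normSq h, D2_normSq h]
  have e1 : (N+ε)^(q-1) = (N+ε)^(q-2) * (N+ε) := by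
    rw [← Real.rpow_add_one hs.ne']; congr 1; ring
  rw [e1]
  have hNe : N = (f z).re^2 + (f z).im^2 := by
    rw [hN, ← Complex.normSq_eq_norm_sq, Complex.normSq_apply]; ring
  set a := (f z).re
  set b := (f z).im
  set c := (deriv f z).re with hc
  set d := (deriv f z).im with hd
  have hdn : ‖deriv f z‖^2 = c^2 + d^2 := by
    rw [← Complex.normSq_eq_norm_sq, Complex.normSq_apply]; ring
  have hpos : 0 < (N+ε)^(q-2) := Real.rpow_pos_of_pos hs _
  set S := (N+ε)^(q-2)
  simp only [one_mul, one_pow, Complex.I_sq, norm_mul, Complex.norm_I, Complex.mul_re,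
    Complex.mul_im, Complex.I_re, Complex.I_im, hdn, Complex.neg_re, Complex.neg_im, ← hc, ← hd,
    Complex.one_re, Complex.one_im]
  have : 0 ≤ 4 * q * S * (c^2+d^2) * (q * N + ε) := by positivity
  refine this.trans_eq ?_
  simp
  rw [hNe]; ring

/-- a `C²` convex regularisation of the positive part -/
def kap (η t : ℝ) : ℝ := (max t 0)^3 / (max t 0 + η)^2
def kap1 (η t : ℝ) : ℝ := (max t 0)^2 * (max t 0 + 3 * η) / (max t 0 + η)^3
def kap2 (η t : ℝ) : ℝ := 6 * η^2 * (max t 0) / (max t 0 + η)^4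

lemma hasDerivAt_glue {F G : ℝ → ℝ} {F' : ℝ → ℝ} (h0 : ∀ t ≤ 0, F t = 0)
    (h1 : ∀ t ≥ 0, F t = G t) (hG : ∀ t ≥ 0, HasDerivAt G (F' t) t) (hF' : ∀ t ≤ 0, F' t = 0)
    (t : ℝ) : HasDerivAt F (F' t) t := by
  rcases lt_trichotomy t 0 with h | h | h
  · rw [hF' t h.le]
    refine (hasDerivAt_const t (0:ℝ)).congr_of_eventuallyEq ?_
    filter_upwards [Iio_mem_nhds h] with s hs using h0 s hs.le
  · subst h
    have a : HasDerivWithinAt F (F' 0) (Iic 0) 0 := by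
      rw [hF' 0 le_rfl]
      exact (hasDerivWithinAt_const (0:ℝ) _ (0:ℝ)).congr (fun s hs => h0 s hs) (h0 0 le_rfl)
    have b : HasDerivWithinAt F (F' 0) (Ici 0) 0 :=
      (hG 0 le_rfl).hasDerivWithinAt.congr (fun s hs => h1 s hs) (h1 0 le_rfl)
    have := a.union b
    rwa [Iic_union_Ici, hasDerivWithinAt_univ] at this
  · refine (hG t h.le).congr_of_eventuallyEq ?_
    filter_upwards [Ioi_mem_nhds h] with s hs using h1 s (le_of_lt hs)

lemma kap_hasDeriv {η : ℝ} (hη : 0 < η) (t : ℝ) : HasDerivAt (kap η) (kap1 η t) t := by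
  refine hasDerivAt_glue (G := fun t => t^3/(t+η)^2) ?_ ?_ ?_ ?_ t
  · intro t ht; simp [kap, ht]
  · intro t ht; simp [kap, ht]
  · intro t ht
    have hp : t + η ≠ 0 := by have : 0 ≤ t := ht; positivity
    have := ((hasDerivAt_id t).pow 3).div (((hasDerivAt_id t).add_const η).pow 2)
      (pow_ne_zero 2 hp)
    refine this.congr_deriv ?_
    simp only [kap1, max_eq_left ht]
    simp
    field_simp
    ring
  · intro t ht; simp [kap1, ht]

lemma kap1_hasDeriv {η : ℝ} (hη : 0 < η) (t : ℝ) : HasDerivAt (kap1 η) (kap2 η t) t := by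
  refine hasDerivAt_glue (G := fun t => t^2 * (t + 3*η)/(t+η)^3) ?_ ?_ ?_ ?_ t
  · intro t ht; simp [kap1, ht]
  · intro t ht; simp [kap1, ht]
  · intro t ht
    have hp : t + η ≠ 0 := by have : 0 ≤ t := ht; positivity
    have := (((hasDerivAt_id t).pow 2).mul ((hasDerivAt_id t).add_const (3*η))).div
      (((hasDerivAt_id t).add_const η).pow 3) (pow_ne_zero 3 hp)
    refine this.congr_deriv ?_
    simp only [kap2, max_eq_left ht]
    simp
    field_simp
    ring
  · intro t ht; simp [kap2, ht]

lemma kap_contDiff {η : ℝ} (hη : 0 < η) : ContDiff ℝ 2 (kap η) := by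
  have d1 : deriv (kap η) = kap1 η := funext fun t => (kap_hasDeriv hη t).deriv
  have d2 : deriv (kap1 η) = kap2 η := funext fun t => (kap1_hasDeriv hη t).deriv
  have c2 : Continuous (kap2 η) := by
    unfold kap2
    refine Continuous.div (by fun_prop) (by fun_prop) fun t => ?_
    have : 0 ≤ max t 0 := le_max_right _ _
    positivity
  have h1 : ContDiff ℝ 1 (kap1 η) := by
    rw [contDiff_one_iff_deriv, d2]
    exact ⟨fun t => (kap1_hasDeriv hη t).differentiableAt, c2⟩
  rw [show (2 : WithTop ℕ∞) = 1 + 1 by norm_num, contDiff_succ_iff_deriv, d1]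
  exact ⟨fun t => (kap_hasDeriv hη t).differentiableAt, by simp, h1⟩

lemma kap_zero {η t : ℝ} (ht : t ≤ 0) : kap η t = 0 := by simp [kap, ht]
lemma kap_nonneg {η : ℝ} (hη : 0 < η) (t : ℝ) : 0 ≤ kap η t := by
  have : 0 ≤ max t 0 := le_max_right _ _
  unfold kap; positivity
lemma kap_ge {η : ℝ} (hη : 0 < η) (t : ℝ) : t - 2 * η ≤ kap η t := by
  rcases le_total t 0 with h | h
  · rw [kap_zero h]; linarith
  · unfold kap
    rw [max_eq_left h, le_div_iff₀ (by positivity)]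
    nlinarith [mul_nonneg h (sq_nonneg η), pow_pos hη 3]
lemma kap1_nonneg {η : ℝ} (hη : 0 < η) (t : ℝ) : 0 ≤ kap1 η t := by
  have : 0 ≤ max t 0 := le_max_right _ _
  unfold kap1; positivity
lemma kap1_le {η : ℝ} (hη : 0 < η) (t : ℝ) : kap1 η t ≤ 1 := by
  have h : 0 ≤ max t 0 := le_max_right _ _
  unfold kap1
  rw [div_le_one (by positivity)]
  nlinarith [mul_nonneg h (sq_nonneg η), pow_pos hη 3]
lemma kap2_nonneg {η : ℝ} (hη : 0 < η) (t : ℝ) : 0 ≤ kap2 η t := by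
  have : 0 ≤ max t 0 := le_max_right _ _
  unfold kap2; positivity

lemma lap_glue_nonneg {η : ℝ} (hη : 0 < η) {Φ H : ℂ → ℝ} {z : ℂ} (hΦ : ContDiffAt ℝ 2 Φ z)
    (hH : ContDiffAt ℝ 2 H z) (h1 : 0 ≤ lap Φ z) (h2 : lap H z = 0) :
    0 ≤ lap (fun w => Φ w + kap η (H w - Φ w)) z := by
  have hs : ContDiffAt ℝ 2 (fun w => H w - Φ w) z := hH.sub hΦ
  have hk : ContDiffAt ℝ 2 (fun w => kap η (H w - Φ w)) z :=
    (kap_contDiff hη).contDiffAt.comp z hs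
  have key : ∀ e : ℂ, D2 e (fun w => Φ w + kap η (H w - Φ w)) z =
     D2 e Φ z + (kap2 η (H z - Φ z) * (fderiv ℝ (fun w => H w - Φ w) z e)^2 +
       kap1 η (H z - Φ z) * (D2 e H z - D2 e Φ z)) := by
    intro e
    rw [D2_add hΦ hk, D2_comp (k := kap η) (k' := kap1 η) hs
      (Eventually.of_forall (kap_hasDeriv hη)) (kap1_hasDeriv hη _), D2_sub hH hΦ]
  rw [lap_eq_D2] at h1 h2 ⊢
  rw [key, key]
  have a := kap2_nonneg hη (H z - Φ z)
  have b := kap1_nonneg hη (H z - Φ z)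
  have c := kap1_le hη (H z - Φ z)
  have e1 := mul_nonneg a (sq_nonneg (fderiv ℝ (fun w => H w - Φ w) z 1))
  have e2 := mul_nonneg a (sq_nonneg (fderiv ℝ (fun w => H w - Φ w) z Complex.I))
  have e3 := mul_nonneg (sub_nonneg.2 c) h1
  have e4 : kap1 η (H z - Φ z) * (D2 1 H z + D2 Complex.I H z) = 0 := by rw [h2]; simp
  nlinarith

/-- conformal inverse -/
structure Conf (Ω : Set ℂ) (ψ G : ℂ → ℂ) : Prop where
  dψ : DifferentiableOn ℂ ψ (ball 0 1)
  mψ : ∀ w ∈ ball (0:ℂ) 1, ψ w ∈ Ω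
  dG : DifferentiableOn ℂ G Ω
  mG : ∀ z ∈ Ω, G z ∈ ball (0:ℂ) 1
  ψG : ∀ z ∈ Ω, ψ (G z) = z
  Gψ : ∀ w ∈ ball (0:ℂ) 1, G (ψ w) = w

lemma exists_conf {Ω : Set ℂ} (hΩ : AnalyticJordanDomain Ω) : ∃ ψ G, Conf Ω ψ G := by
  obtain ⟨U, ψ, hU, hBU, hd, hinj, him, -⟩ := hΩ.analyticBoundary
  have hBU' : ball (0:ℂ) 1 ⊆ U := ball_subset_closedBall.trans hBU
  have hinj' : InjOn ψ (ball 0 1) := hinj.mono hBU'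
  have hd' : DifferentiableOn ℂ ψ (ball 0 1) := hd.mono hBU'
  have han : AnalyticOnNhd ℂ ψ (ball 0 1) := hd'.analyticOnNhd isOpen_ball
  set G := Function.invFunOn ψ (ball 0 1) with hG
  have hex : ∀ z ∈ Ω, ∃ w ∈ ball (0:ℂ) 1, ψ w = z := by
    intro z hz; rw [← him] at hz; exact hz
  have mG : ∀ z ∈ Ω, G z ∈ ball (0:ℂ) 1 := fun z hz => Function.invFunOn_mem (hex z hz)
  have ψG : ∀ z ∈ Ω, ψ (G z) = z := fun z hz => Function.invFunOn_eq (hex z hz)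
  have mψ : ∀ w ∈ ball (0:ℂ) 1, ψ w ∈ Ω := fun w hw => him ▸ mem_image_of_mem ψ hw
  have Gψ : ∀ w ∈ ball (0:ℂ) 1, G (ψ w) = w := fun w hw =>
    hinj' (mG _ (mψ w hw)) hw (ψG _ (mψ w hw))
  have hpre : IsPreconnected (ball (0:ℂ) 1) := (convex_ball _ _).isPreconnected
  have hnc : ¬ ∃ w, ∀ z ∈ ball (0:ℂ) 1, ψ z = w := by
    rintro ⟨w, hw⟩
    have h1 : (0:ℂ) ∈ ball (0:ℂ) 1 := by simp
    have h2 : (1/2:ℂ) ∈ ball (0:ℂ) 1 := by simp; norm_num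
    have := hinj' h1 h2 (by rw [hw _ h1, hw _ h2])
    norm_num at this
  have hopen : ∀ s ⊆ ball (0:ℂ) 1, IsOpen s → IsOpen (ψ '' s) :=
    (han.is_constant_or_isOpen hpre).resolve_left hnc
  have cG : ContinuousOn G Ω := by
    intro z hz
    apply ContinuousAt.continuousWithinAt
    rw [ContinuousAt, tendsto_def]
    intro V hV
    obtain ⟨V', hV'V, hV'o, hV'm⟩ := _root_.mem_nhds_iff.1 hV
    have ho := hopen (V' ∩ ball 0 1) inter_subset_right (hV'o.inter isOpen_ball)
    refine mem_of_superset (ho.mem_nhds ⟨G z, ⟨hV'm, mG z hz⟩, ψG z hz⟩) ?_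
    rintro _ ⟨w, ⟨hw1, hw2⟩, rfl⟩
    simp only [mem_preimage, Gψ w hw2]
    exact hV'V hw1
  have cGa : ∀ z ∈ Ω, ContinuousAt G z := fun z hz => cG.continuousAt (hΩ.isOpen.mem_nhds hz)
  have hdG1 : ∀ z ∈ Ω, deriv ψ (G z) ≠ 0 → DifferentiableAt ℂ G z := by
    intro z hz hne
    have h1 : HasDerivAt ψ (deriv ψ (G z)) (G z) := (han _ (mG z hz)).differentiableAt.hasDerivAt
    exact (h1.of_local_left_inverse (cGa z hz) hne
      ((hΩ.isOpen.eventually_mem hz).mono ψG)).differentiableAt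
  refine ⟨ψ, G, hd', mψ, ?_, mG, ψG, Gψ⟩
  intro z hz
  apply DifferentiableAt.differentiableWithinAt
  have hda : AnalyticOnNhd ℂ (deriv ψ) (ball 0 1) := han.deriv
  rcases (hda _ (mG z hz)).eventually_eq_zero_or_eventually_ne_zero with h | h
  · exfalso
    have h0 : EqOn (deriv ψ) 0 (ball 0 1) := hda.eqOn_zero_of_preconnected_of_eventuallyEq_zero
      hpre (mG z hz) h
    apply hnc
    refine ⟨ψ 0, fun w hw => ?_⟩
    exact (convex_ball (0:ℂ) 1).is_const_of_fderivWithin_eq_zero (𝕜 := ℂ) hd' (fun x hx => by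
      rw [fderivWithin_of_isOpen isOpen_ball hx]
      ext
      simpa using h0 hx) hw (by simp)
  · refine (analyticAt_of_differentiable_on_punctured_nhds_of_continuousAt ?_ (cGa z hz)).differentiableAt
    have h1 : Tendsto G (𝓝[≠] z) (𝓝[≠] (G z)) := by
      refine tendsto_nhdsWithin_iff.2 ⟨(cGa z hz).tendsto.mono_left nhdsWithin_le_nhds, ?_⟩
      filter_upwards [self_mem_nhdsWithin, nhdsWithin_le_nhds (hΩ.isOpen.mem_nhds hz)] with y hy hyΩ
      intro he
      apply hy
      have : ψ (G y) = ψ (G z) := by rw [he]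
      rwa [ψG y hyΩ, ψG z hz] at this
    filter_upwards [h1.eventually h, nhdsWithin_le_nhds (hΩ.isOpen.mem_nhds hz)] with y hy hyΩ
    exact hdG1 y hyΩ hy

lemma HarmonicOn.harmonicAt {h : ℂ → ℝ} {Ω : Set ℂ} (hΩ : IsOpen Ω) (hh : HarmonicOn h Ω)
    {z : ℂ} (hz : z ∈ Ω) : InnerProductSpace.HarmonicAt h z := by
  have hc : ∀ w ∈ Ω, ContDiffAt ℝ 2 h w := fun w hw => hh.1.contDiffAt (hΩ.mem_nhds hw)
  refine ⟨hc z hz, ?_⟩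
  filter_upwards [hΩ.mem_nhds hz] with w hw
  rw [InnerProductSpace.laplacian_eq_iteratedFDeriv_complexPlane]
  simp only [iteratedFDeriv_two_apply, Pi.zero_apply]
  rw [← hh.2 w hw, lap]
  have hd : DifferentiableAt ℝ (fderiv ℝ h) w :=
    ((hc w hw).fderiv_right (m := 1) (by norm_num)).differentiableAt (by norm_num)
  have key : ∀ e : ℂ, fderiv ℝ (fun y => fderiv ℝ h y e) w e = fderiv ℝ (fderiv ℝ h) w e e := by
    intro e
    rw [fderiv_clm_apply hd (by fun_prop)]
    simp
  rw [key, key]; simp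

lemma harm_pull {h : ℂ → ℝ} {Ω : Set ℂ} {ψ G : ℂ → ℂ} (hΩ : IsOpen Ω) (cf : Conf Ω ψ G)
    (hh : HarmonicOn h Ω) : ∃ P : ℂ → ℂ, AnalyticOnNhd ℂ P (ball 0 1) ∧
      ∀ w ∈ ball (0:ℂ) 1, (P w).re = h (ψ w) := by
  have H : InnerProductSpace.HarmonicOnNhd (fun w => h (ψ w)) (ball 0 1) := by
    intro w hw
    obtain ⟨ε, hε, hsub⟩ := Metric.isOpen_iff.1 hΩ (ψ w) (cf.mψ w hw)
    obtain ⟨F, hF, hFe⟩ := InnerProductSpace.HarmonicOnNhd.exists_analyticOnNhd_ball_re_eq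
      (f := h) (z := ψ w) (R := ε) (fun y hy => hh.harmonicAt hΩ (hsub hy))
    have ha : AnalyticAt ℂ ψ w := (cf.dψ.analyticOnNhd isOpen_ball) w hw
    have h2 : AnalyticAt ℂ (F ∘ ψ) w := (hF _ (mem_ball_self hε)).comp ha
    have h3 := h2.harmonicAt_re
    refine (InnerProductSpace.harmonicAt_congr_nhds ?_).1 h3
    filter_upwards [ha.continuousAt.preimage_mem_nhds (ball_mem_nhds _ hε)] with y hy
    exact hFe hy
  obtain ⟨P, hP, hPe⟩ := InnerProductSpace.HarmonicOnNhd.exists_analyticOnNhd_ball_re_eq H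
  exact ⟨P, hP, fun w hw => hPe hw⟩

lemma harmonicOn_re {P : ℂ → ℂ} {Ω : Set ℂ} (hP : AnalyticOnNhd ℂ P Ω) :
    HarmonicOn (fun z => (P z).re) Ω :=
  ⟨fun z hz => (contDiffAt_re_hol (hP z hz)).contDiffWithinAt, fun z hz => lap_re_hol (hP z hz)⟩

lemma harnack {K : ℂ → ℂ} {ρ : ℝ} (hK : AnalyticOnNhd ℂ K (closedBall 0 ρ))
    (h0 : ∀ w ∈ sphere (0:ℂ) ρ, 0 ≤ (K w).re) {w : ℂ} (hw : w ∈ ball (0:ℂ) ρ) :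
    (ρ - ‖w‖) / (ρ + ‖w‖) * (K 0).re ≤ (K w).re ∧
    (K w).re ≤ (ρ + ‖w‖) / (ρ - ‖w‖) * (K 0).re := by
  have hρ : 0 < ρ := by simpa using (norm_nonneg w).trans_lt (by simpa using hw)
  have hH : InnerProductSpace.HarmonicOnNhd (fun w => (K w).re) (closedBall 0 ρ) :=
    fun z hz => (hK z hz).harmonicAt_re
  have e1 := InnerProductSpace.HarmonicOnNhd.circleAverage_poissonKernel_smul hH hw
  have e2 := InnerProductSpace.HarmonicOnNhd.circleAverage_eq (f := fun w => (K w).re) (c := 0)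
    (R := ρ) (by rwa [abs_of_pos hρ])
  have cK : ContinuousOn (fun w => (K w).re) (sphere (0:ℂ) |ρ|) := by
    rw [abs_of_pos hρ]
    exact Complex.continuous_re.comp_continuousOn (hK.continuousOn.mono sphere_subset_closedBall)
  have cP : ContinuousOn (poissonKernel 0 w) (sphere (0:ℂ) |ρ|) := by
    rw [poissonKernel_eq_re_herglotzRieszKernel]
    exact Complex.continuous_re.comp_continuousOn (continuousOn_herglotzRieszKernel_sphere hw)
  have i1 : CircleIntegrable (poissonKernel 0 w • fun w => (K w).re) 0 ρ :=
    (cP.smul cK).circleIntegrable'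
  have i2 : ∀ c : ℝ, CircleIntegrable (fun w => c • (K w).re) 0 ρ := fun c =>
    ContinuousOn.circleIntegrable' (f := fun w => c • (K w).re) (cK.const_smul c)
  have b : ∀ x ∈ sphere (0:ℂ) |ρ|, (ρ - ‖w‖) / (ρ + ‖w‖) ≤ poissonKernel 0 w x ∧
      poissonKernel 0 w x ≤ (ρ + ‖w‖) / (ρ - ‖w‖) := by
    intro x hx
    rw [abs_of_pos hρ] at hx
    rw [poissonKernel_eq_re_herglotzRieszKernel]
    simpa [herglotzRieszKernel_def] using And.intro (le_re_herglotzRieszKernel hx hw)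
      (re_herglotzRieszKernel_le hx hw)
  constructor
  · rw [← e1, ← e2, ← smul_eq_mul, ← Real.circleAverage_fun_smul]
    refine Real.circleAverage_mono (i2 _) i1 fun x hx => ?_
    simpa using mul_le_mul_of_nonneg_right (b x hx).1 (h0 x (by rwa [abs_of_pos hρ] at hx))
  · rw [← e1, ← e2, ← smul_eq_mul, ← Real.circleAverage_fun_smul]
    refine Real.circleAverage_mono i1 (i2 _) fun x hx => ?_
    simpa using mul_le_mul_of_nonneg_right (b x hx).2 (h0 x (by rwa [abs_of_pos hρ] at hx))

lemma re_nonneg_inside {K : ℂ → ℂ} {ρ : ℝ} (hK : AnalyticOnNhd ℂ K (closedBall 0 ρ))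
    (h0 : ∀ w ∈ sphere (0:ℂ) ρ, 0 ≤ (K w).re) {w : ℂ} (hw : w ∈ ball (0:ℂ) ρ) :
    0 ≤ (K w).re := by
  have hn : ‖w‖ < ρ := by simpa using hw
  have hρ : 0 < ρ := (norm_nonneg w).trans_lt hn
  have h1 : 0 ≤ (K 0).re := by
    have hH : InnerProductSpace.HarmonicOnNhd (fun w => (K w).re) (closedBall 0 |ρ|) :=
      fun z hz => (hK z (by rwa [abs_of_pos hρ] at hz)).harmonicAt_re
    rw [← InnerProductSpace.HarmonicOnNhd.circleAverage_eq hH]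
    exact Real.circleAverage_nonneg_of_nonneg fun x hx => h0 x (by rwa [abs_of_pos hρ] at hx)
  have h2 := harnack hK h0 hw
  have h5 : 0 ≤ (ρ - ‖w‖) / (ρ + ‖w‖) := div_nonneg (by linarith) (by linarith [norm_nonneg w])
  exact (mul_nonneg h5 h1).trans h2.1

lemma pow_major {F P : ℂ → ℂ} {ρ p : ℝ} (hp : 1 ≤ p) (hF : AnalyticOnNhd ℂ F (closedBall 0 ρ))
    (hP : AnalyticOnNhd ℂ P (closedBall 0 ρ))
    (h0 : ∀ w ∈ sphere (0:ℂ) ρ, ‖F w‖ ^ p ≤ (P w).re) {w : ℂ} (hw : w ∈ ball (0:ℂ) ρ) :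
    ‖F w‖ ^ p ≤ (P w).re := by
  set a := ‖F w‖ with ha
  obtain ⟨c, hc, hcF⟩ : ∃ c : ℂ, ‖c‖ = 1 ∧ c * F w = a := by
    by_cases h : F w = 0
    · exact ⟨1, by simp, by simp [ha, h]⟩
    · have hn : (‖F w‖ : ℂ) ≠ 0 := by simpa using h
      refine ⟨(‖F w‖ : ℂ) / F w, by simp [h], by field_simp; simp [ha]⟩
  have ha0 : 0 ≤ a := norm_nonneg _
  have tang : ∀ x : ℝ, 0 ≤ x → a ^ p + p * a ^ (p - 1) * (x - a) ≤ x ^ p := by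
    intro x hx
    rcases ha0.eq_or_lt with h | h
    · rw [← h]
      rcases hp.eq_or_lt with hp1 | hp1
      · subst hp1; simp
      · rw [Real.zero_rpow (by linarith), Real.zero_rpow (by linarith)]; simp; positivity
    · have := one_add_mul_self_le_rpow_one_add (s := (x - a)/a) (by rw [le_div_iff₀ h]; linarith) hp
      have e : 1 + (x - a)/a = x / a := by field_simp; ring
      rw [e, Real.div_rpow hx ha0, le_div_iff₀ (by positivity)] at this
      refine le_trans (le_of_eq ?_) this
      rw [Real.rpow_sub_one h.ne']
      field_simp
  set K : ℂ → ℂ := fun z => P z - (a ^ p : ℝ) - (p * a ^ (p-1) : ℝ) * (c * F z - a) with hKd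
  have hK : AnalyticOnNhd ℂ K (closedBall 0 ρ) :=
    (hP.sub analyticOnNhd_const).sub (analyticOnNhd_const.mul ((analyticOnNhd_const.mul hF).sub
      analyticOnNhd_const))
  have := re_nonneg_inside hK (fun z hz => ?_) hw
  · simp only [hKd, hcF] at this
    simpa using this
  · have h1 := h0 z hz
    have h2 := tang ‖F z‖ (norm_nonneg _)
    have h3 : (c * F z).re ≤ ‖F z‖ := (Complex.re_le_norm _).trans (by simp [hc])
    have h4 : 0 ≤ p * a ^ (p-1) := by positivity
    have h5 := mul_le_mul_of_nonneg_left h3 h4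
    simp only [hKd, sub_re, re_ofReal_mul, ofReal_re]
    nlinarith

lemma trig_approx {g : ℂ → ℝ} {ρ δ : ℝ} (hρ : 0 < ρ) (hg : ContinuousOn g (sphere 0 ρ))
    (hδ : 0 < δ) : ∃ P : ℂ → ℂ, Differentiable ℂ P ∧
      ∀ w ∈ sphere (0:ℂ) ρ, |(P w).re - g w| < δ := by
  have : Fact (0 < (1:ℝ)) := ⟨one_pos⟩
  have hm : ∀ e : Circle, (ρ * e : ℂ) ∈ sphere (0:ℂ) ρ := by
    intro e; rw [mem_sphere_zero_iff_norm, norm_mul, Circle.norm_coe]; simp [abs_of_pos hρ]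
  let g' : C(AddCircle (1:ℝ), ℂ) := ⟨fun θ => (g (ρ * (AddCircle.toCircle θ : ℂ)) : ℂ), by
    refine Complex.continuous_ofReal.comp (hg.comp_continuous ?_ fun θ => hm _)
    exact continuous_const.mul (continuous_induced_dom.comp AddCircle.continuous_toCircle)⟩
  have hmem : g' ∈ (Submodule.span ℂ (range (@fourier (1:ℝ)))).topologicalClosure := by
    rw [span_fourier_closure_eq_top]; trivial
  obtain ⟨τ, hτ, hd⟩ := Metric.mem_closure_iff.1 hmem δ hδ
  have key : ∃ P Q : ℂ → ℂ, Differentiable ℂ P ∧ Differentiable ℂ Q ∧ ∀ θ,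
      τ θ = P (ρ * (AddCircle.toCircle θ : ℂ)) + (starRingEnd ℂ) (Q (ρ * (AddCircle.toCircle θ : ℂ))) := by
    clear hd
    have hρc : (ρ:ℂ) ≠ 0 := by exact_mod_cast hρ.ne'
    induction hτ using Submodule.span_induction with
    | mem x hx =>
      obtain ⟨n, rfl⟩ := hx
      rcases n with m | m
      · refine ⟨fun z => (z / ρ) ^ m, 0, by fun_prop, differentiable_const _, fun θ => ?_⟩
        rw [fourier_apply, AddCircle.toCircle_zsmul]
        simp [hρc]
      · refine ⟨0, fun z => (z / ρ) ^ (m+1), differentiable_const _, by fun_prop, fun θ => ?_⟩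
        rw [fourier_apply, AddCircle.toCircle_zsmul, zpow_negSucc]
        simp only [Pi.zero_apply, zero_add]
        rw [Circle.coe_inv_eq_conj, mul_div_cancel_left₀ _ hρc]
        simp
    | zero => exact ⟨0, 0, differentiable_const _, differentiable_const _, fun θ => by simp⟩
    | add x y _ _ hx hy =>
      obtain ⟨P, Q, hP, hQ, h⟩ := hx
      obtain ⟨P', Q', hP', hQ', h'⟩ := hy
      refine ⟨P + P', Q + Q', hP.add hP', hQ.add hQ', fun θ => ?_⟩
      simp [h, h']; ring
    | smul a x _ hx =>
      obtain ⟨P, Q, hP, hQ, h⟩ := hx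
      refine ⟨fun z => a * P z, fun z => (starRingEnd ℂ) a * Q z, hP.const_mul _, hQ.const_mul _,
        fun θ => ?_⟩
      simp [h]; ring
  obtain ⟨P, Q, hP, hQ, h⟩ := key
  refine ⟨P + Q, hP.add hQ, fun w hw => ?_⟩
  have hwn : ‖w‖ = ρ := by simpa using hw
  have hρc : (ρ:ℂ) ≠ 0 := by exact_mod_cast hρ.ne'
  obtain ⟨θ, hθ⟩ : ∃ θ : AddCircle (1:ℝ), w = ρ * (AddCircle.toCircle θ : ℂ) := by
    let e : Circle := ⟨w / ρ, by
      show w / ρ ∈ sphere (0:ℂ) 1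
      rw [mem_sphere_zero_iff_norm, norm_div, hwn]; simp [hρ.ne', abs_of_pos hρ]⟩
    obtain ⟨θ, hθ⟩ := (AddCircle.homeomorphCircle (T := 1) one_ne_zero).surjective e
    refine ⟨θ, ?_⟩
    rw [AddCircle.homeomorphCircle_apply] at hθ
    rw [hθ]
    show w = ρ * (w / ρ)
    field_simp
  have h1 := (ContinuousMap.dist_apply_le_dist (f := g') (g := τ) θ).trans_lt hd
  have h2 : |((g' θ) - τ θ).re| < δ := (Complex.abs_re_le_norm _).trans_lt (by rwa [← dist_eq_norm])
  rw [h θ, ← hθ] at h2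
  have h3 : g' θ = (g w : ℂ) := by rw [hθ]; rfl
  rw [h3] at h2
  rw [abs_sub_comm]
  simpa using h2

structure Cut (Ω L : Set ℂ) (χ : ℂ → ℝ) : Prop where
  smooth : ContDiff ℝ 2 χ
  cpt : HasCompactSupport χ
  supp : tsupport χ ⊆ Ω
  nonneg : ∀ z, 0 ≤ χ z
  le_one : ∀ z, χ z ≤ 1
  one : ∀ z ∈ L, χ z = 1

lemma exists_cut {Ω L : Set ℂ} (hΩ : IsOpen Ω) (hL : IsCompact L) (hLΩ : L ⊆ Ω) :
    ∃ χ, Cut Ω L χ := by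
  obtain ⟨K, hK, hLK, hKΩ⟩ := exists_compact_between hL hΩ hLΩ
  obtain ⟨f, hf1, hf0, hf⟩ := exists_contMDiffMap_one_nhds_of_subset_interior (n := (2:ℕ∞))
    (I := modelWithCornersSelf ℝ ℂ) hL.isClosed hLK
  have hs : tsupport f ⊆ K := closure_minimal (fun x hx => by
    by_contra h; exact hx (hf0 x h)) hK.isClosed
  refine ⟨f, f.contMDiff.contDiff, ?_, hs.trans hKΩ, fun z => (hf z).1, fun z => (hf z).2,
    fun z hz => hf1.self_of_nhdsSet z hz⟩
  exact HasCompactSupport.of_support_subset_isCompact hK (subset_closure.trans hs)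

lemma contDiff_cut_mul {Ω L : Set ℂ} {χ Ψ : ℂ → ℝ} (hΩ : IsOpen Ω) (hc : Cut Ω L χ)
    (hΨ : ContDiffOn ℝ 2 Ψ Ω) : ContDiff ℝ 2 (fun z => χ z * Ψ z) := by
  rw [contDiff_iff_contDiffAt]
  intro z
  by_cases hz : z ∈ Ω
  · exact hc.smooth.contDiffAt.mul (hΨ.contDiffAt (hΩ.mem_nhds hz))
  · have h : χ =ᶠ[𝓝 z] 0 := notMem_tsupport_iff_eventuallyEq.1 fun h => hz (hc.supp h)
    refine (contDiffAt_const (c := (0:ℝ))).congr_of_eventuallyEq ?_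
    filter_upwards [h] with y hy
    simp [hy]

lemma Cut.mul_cpt {Ω L : Set ℂ} {χ Ψ : ℂ → ℝ} (hc : Cut Ω L χ) :
    HasCompactSupport (fun z => χ z * Ψ z) := hc.cpt.mul_right

lemma Cut.mul_supp {Ω L : Set ℂ} {χ Ψ : ℂ → ℝ} (hc : Cut Ω L χ) :
    tsupport (fun z => χ z * Ψ z) ⊆ Ω := (tsupport_mul_subset_left).trans hc.supp

lemma continuous_fderiv_e {φ : ℂ → ℝ} (h : ContDiff ℝ 2 φ) (e : ℂ) :
    ContDiff ℝ 1 (fun w => fderiv ℝ φ w e) :=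
  (h.fderiv_right (m := 1) (by norm_num)).clm_apply contDiff_const

lemma continuous_lap {φ : ℂ → ℝ} (h : ContDiff ℝ 2 φ) : Continuous (lap φ) := by
  have h1 : ∀ e : ℂ, Continuous fun z => fderiv ℝ (fun w => fderiv ℝ φ w e) z e := fun e =>
    ((continuous_fderiv_e h e).continuous_fderiv (by norm_num)).clm_apply continuous_const
  exact (h1 1).add (h1 Complex.I)

lemma lap_zero_off {φ : ℂ → ℝ} {z : ℂ} (hz : z ∉ tsupport φ) : lap φ z = 0 := by
  have h : φ =ᶠ[𝓝 z] fun _ => 0 := notMem_tsupport_iff_eventuallyEq.1 hz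
  rw [lap_congr h]
  simp [lap]

lemma integrableOn_mul_lap {Ω : Set ℂ} {φ v : ℂ → ℝ} (hv : ContinuousOn v Ω)
    (h : ContDiff ℝ 2 φ) (hc : HasCompactSupport φ) (hs : tsupport φ ⊆ Ω) (hΩ : IsOpen Ω) :
    IntegrableOn (fun z => v z * lap φ z) Ω := by
  have h1 : IntegrableOn (fun z => v z * lap φ z) (tsupport φ) :=
    ((hv.mono hs).mul (continuous_lap h).continuousOn).integrableOn_compact hc
  exact h1.of_forall_sdiff_eq_zero hΩ.measurableSet fun z hz => by rw [lap_zero_off hz.2, mul_zero]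

lemma integral_lap {φ : ℂ → ℝ} (h : ContDiff ℝ 2 φ) (hc : HasCompactSupport φ) :
    ∫ z, lap φ z = 0 := by
  have key : ∀ e : ℂ, Integrable (fun z => fderiv ℝ (fun w => fderiv ℝ φ w e) z e) ∧
      ∫ z, fderiv ℝ (fun w => fderiv ℝ φ w e) z e = 0 := by
    intro e
    have hs1 : HasCompactSupport (fun w => fderiv ℝ φ w e) := hc.fderiv_apply ℝ e
    have hs2 : HasCompactSupport (fun z => fderiv ℝ (fun w => fderiv ℝ φ w e) z e) :=
      hs1.fderiv_apply ℝ e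
    have hcd := continuous_fderiv_e h e
    have i1 : Integrable (fun w => fderiv ℝ φ w e) :=
      hcd.continuous.integrable_of_hasCompactSupport hs1
    have i2 : Integrable (fun z => fderiv ℝ (fun w => fderiv ℝ φ w e) z e) :=
      ((hcd.continuous_fderiv (by norm_num)).clm_apply continuous_const).integrable_of_hasCompactSupport hs2
    refine ⟨i2, ?_⟩
    have := integral_mul_fderiv_eq_neg_fderiv_mul_of_integrable (μ := volume) (𝕜 := ℝ)
      (f := fun _ : ℂ => (1:ℝ)) (g := fun w => fderiv ℝ φ w e) (v := e) (by simp) (by simpa using i2)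
      (by simpa using i1) (fun _ _ => differentiableAt_const _) (fun x _ => (hcd.differentiable (by norm_num)) x)
    simpa using this
  have e : lap φ = fun z => fderiv ℝ (fun w => fderiv ℝ φ w 1) z 1 +
    fderiv ℝ (fun w => fderiv ℝ φ w Complex.I) z Complex.I := rfl
  rw [e, integral_add (key 1).1 (key Complex.I).1, (key 1).2, (key Complex.I).2, add_zero]

/-- The basic context. -/
structure Ctx (Ω : Set ℂ) (u : ℂ → ℝ) (ν : Measure ℂ) : Prop where
  op : IsOpen Ω
  z0 : (0:ℂ) ∈ Ω
  ex : IsExhaustion u Ω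
  rz : IsRieszMeasure u Ω ν
  fin : ν Set.univ < ⊤

lemma Ctx.sub_open {Ω u ν} (cx : Ctx Ω u ν) (r : ℝ) : IsOpen {z | z ∈ Ω ∧ u z < r} :=
  cx.ex.subh.1.isOpen_inter_preimage cx.op isOpen_Iio

lemma Ctx.cut {Ω u ν} (cx : Ctx Ω u ν) {r : ℝ} (hr : r < 0) :
    ∃ χ, Cut Ω {z | z ∈ Ω ∧ u z < r} χ := by
  obtain ⟨χ, hχ⟩ := exists_cut cx.op (cx.ex.exh r hr).1 (cx.ex.exh r hr).2
  exact ⟨χ, hχ.smooth, hχ.cpt, hχ.supp, hχ.nonneg, hχ.le_one, fun z hz => hχ.one z (subset_closure hz)⟩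

lemma Ctx.max_cont {Ω u ν} (cx : Ctx Ω u ν) (r : ℝ) : ContinuousOn (fun z => max (u z) r) Ω :=
  cx.ex.subh.1.sup continuousOn_const

lemma Ctx.ident {Ω u ν} (cx : Ctx Ω u ν) {r : ℝ} {χ Ψ : ℂ → ℝ} {νr : Measure ℂ}
    (hχ : Cut Ω {z | z ∈ Ω ∧ u z < r} χ) (hνr : IsRieszMeasure (fun z => max (u z) r) Ω νr)
    (hΨ : ContDiffOn ℝ 2 Ψ Ω) :
    ∫ z, χ z * Ψ z ∂νr = ∫ z, χ z * Ψ z ∂ν +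
      (4:ℝ)⁻¹ * ∫ z in Ω, (max (u z) r - u z) * lap Ψ z := by
  have hcd := contDiff_cut_mul cx.op hχ hΨ
  rw [hνr.2 _ hcd hχ.mul_cpt hχ.mul_supp, cx.rz.2 _ hcd hχ.mul_cpt hχ.mul_supp,
    ← sub_eq_iff_eq_add', ← mul_sub, ← integral_sub
      (integrableOn_mul_lap (cx.max_cont r) hcd hχ.mul_cpt hχ.mul_supp cx.op)
      (integrableOn_mul_lap cx.ex.subh.1 hcd hχ.mul_cpt hχ.mul_supp cx.op)]
  congr 1
  refine setIntegral_congr_fun cx.op.measurableSet fun z hz => ?_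
  simp only [← sub_mul]
  by_cases h : u z < r
  · congr 1
    apply lap_congr
    filter_upwards [(cx.sub_open r).mem_nhds ⟨hz, h⟩] with y hy
    rw [hχ.one y hy, one_mul]
  · rw [max_eq_left (not_lt.1 h)]; simp

lemma lap_one_add_normSq (z : ℂ) : lap (fun z : ℂ => 1 + ‖z‖ ^ 2) z = 4 := by
  have e : (fun z : ℂ => 1 + ‖z‖ ^ 2) = fun z : ℂ => 1 + (z.re * z.re + z.im * z.im) := by
    ext z; rw [← Complex.normSq_eq_norm_sq, Complex.normSq_apply]
  have hd : ∀ w e : ℂ, fderiv ℝ (fun z : ℂ => 1 + (z.re * z.re + z.im * z.im)) w e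
      = 2 * (w.re * e.re + w.im * e.im) := by
    intro w e
    have h1 : HasFDerivAt (fun z : ℂ => z.re) reCLM w := reCLM.hasFDerivAt
    have h2 : HasFDerivAt (fun z : ℂ => z.im) imCLM w := imCLM.hasFDerivAt
    have := (((h1.mul h1).add (h2.mul h2)).const_add 1).fderiv
    refine (congrArg (fun T : ℂ →L[ℝ] ℝ => T e) this).trans ?_
    simp; ring
  rw [e, lap]
  simp only [hd]
  have h1 : fderiv ℝ (fun w : ℂ => 2 * (w.re * (1:ℂ).re + w.im * (1:ℂ).im)) z 1 = 2 := by
    have : HasFDerivAt (fun z : ℂ => z.re) reCLM z := reCLM.hasFDerivAt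
    simp only [one_re, mul_one, one_im, mul_zero, add_zero]
    rw [(this.const_mul 2).fderiv]; simp
  have h2 : fderiv ℝ (fun w : ℂ => 2 * (w.re * I.re + w.im * I.im)) z I = 2 := by
    have : HasFDerivAt (fun z : ℂ => z.im) imCLM z := imCLM.hasFDerivAt
    simp only [I_re, mul_one, I_im, mul_zero, zero_add]
    rw [(this.const_mul 2).fderiv]; simp
  rw [h1, h2]; norm_num

lemma contDiff_one_add_normSq : ContDiff ℝ 2 (fun z : ℂ => 1 + ‖z‖ ^ 2) :=
  contDiff_const.add (contDiff_norm_sq ℝ)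

lemma Ctx.w_pos {Ω u ν} (cx : Ctx Ω u ν) {r : ℝ} (hr : r < 0) (h0 : u 0 < r) :
    0 < ∫ z in Ω, (max (u z) r - u z) := by
  have hnn : ∀ z, 0 ≤ max (u z) r - u z := fun z => sub_nonneg.2 (le_max_left _ _)
  have hint : IntegrableOn (fun z => max (u z) r - u z) Ω := by
    have h1 : IntegrableOn (fun z => max (u z) r - u z) (closure {z | z ∈ Ω ∧ u z < r}) :=
      (((cx.max_cont r).sub cx.ex.subh.1).mono (cx.ex.exh r hr).2).integrableOn_compact
        (cx.ex.exh r hr).1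
    refine h1.of_forall_sdiff_eq_zero cx.op.measurableSet fun z hz => ?_
    have : ¬ u z < r := fun h => hz.2 (subset_closure ⟨hz.1, h⟩)
    rw [max_eq_left (not_lt.1 this), sub_self]
  rw [setIntegral_pos_iff_support_of_nonneg_ae (ae_of_all _ hnn) hint]
  have hsub : {z | z ∈ Ω ∧ u z < r} ⊆ (Function.support fun z => max (u z) r - u z) ∩ Ω := by
    rintro z ⟨hz, h⟩
    refine ⟨?_, hz⟩
    rw [Function.mem_support, max_eq_right h.le]
    exact (sub_pos.2 h).ne'
  exact lt_of_lt_of_le ((cx.sub_open r).measure_pos volume ⟨0, cx.z0, h0⟩) (measure_mono hsub)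

lemma Cut.mono {Ω L L' : Set ℂ} {χ : ℂ → ℝ} (h : Cut Ω L χ) (hL : L' ⊆ L) : Cut Ω L' χ :=
  ⟨h.smooth, h.cpt, h.supp, h.nonneg, h.le_one, fun z hz => h.one z (hL hz)⟩

lemma Cut.integrable {Ω L : Set ℂ} {χ Ψ : ℂ → ℝ} (h : Cut Ω L χ) (hΩ : IsOpen Ω)
    (hΨ : ContDiffOn ℝ 2 Ψ Ω) {m : Measure ℂ} (hm : m univ < ⊤) :
    Integrable (fun z => χ z * Ψ z) m := by
  have : IsFiniteMeasure m := ⟨hm⟩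
  exact (contDiff_cut_mul hΩ h hΨ).continuous.integrable_of_hasCompactSupport h.mul_cpt

lemma Ctx.int_one {Ω u ν} (cx : Ctx Ω u ν) {r : ℝ} {χ : ℂ → ℝ} {νr : Measure ℂ}
    (hχ : Cut Ω {z | z ∈ Ω ∧ u z < r} χ) (hνr : IsRieszMeasure (fun z => max (u z) r) Ω νr) :
    ∫ z, χ z ∂νr = ∫ z, χ z ∂ν := by
  have h := cx.ident (Ψ := fun _ => 1) hχ hνr contDiffOn_const
  have e : ∀ z, lap (fun _ : ℂ => (1:ℝ)) z = 0 := fun z => by simp [lap]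
  simpa [e] using h

lemma Ctx.int_sq {Ω u ν} (cx : Ctx Ω u ν) {r : ℝ} {χ : ℂ → ℝ} {νr : Measure ℂ}
    (hr : r < 0) (h0 : u 0 < r)
    (hχ : Cut Ω {z | z ∈ Ω ∧ u z < r} χ) (hνr : IsRieszMeasure (fun z => max (u z) r) Ω νr) :
    ∫ z, χ z * (1 + ‖z‖ ^ 2) ∂ν < ∫ z, χ z * (1 + ‖z‖ ^ 2) ∂νr := by
  have h := cx.ident (Ψ := fun z => 1 + ‖z‖ ^ 2) hχ hνr contDiff_one_add_normSq.contDiffOn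
  simp only [lap_one_add_normSq] at h
  rw [h, integral_mul_const]
  have := cx.w_pos hr h0
  linarith

lemma Ctx.integrable_cut {Ω u ν} (cx : Ctx Ω u ν) {r : ℝ} {χ : ℂ → ℝ} {νr : Measure ℂ}
    (hr : r < 0) (h0 : u 0 < r)
    (hχ : Cut Ω {z | z ∈ Ω ∧ u z < r} χ) (hνr : IsRieszMeasure (fun z => max (u z) r) Ω νr) :
    Integrable χ νr := by
  by_contra hni
  have h2 : ¬ Integrable (fun z => χ z * (1 + ‖z‖ ^ 2)) νr := by
    intro hi
    refine hni (hi.mono' hχ.smooth.continuous.aestronglyMeasurable (ae_of_all _ fun z => ?_))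
    rw [Real.norm_of_nonneg (hχ.nonneg z)]
    nlinarith [hχ.nonneg z, mul_nonneg (hχ.nonneg z) (sq_nonneg ‖z‖)]
  have h := cx.int_sq hr h0 hχ hνr
  rw [integral_undef h2] at h
  exact absurd h (not_lt.2 (integral_nonneg fun z => mul_nonneg (hχ.nonneg z) (by positivity)))

lemma Ctx.union {Ω u ν} (cx : Ctx Ω u ν) :
    Ω = ⋃ n : ℕ, {z | z ∈ Ω ∧ u z < -(1 / ((n:ℝ) + 1))} := by
  ext z
  simp only [mem_iUnion, mem_ofPred_eq]
  constructor
  · intro hz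
    obtain ⟨n, hn⟩ := exists_nat_one_div_lt (neg_pos.2 (cx.ex.neg z hz))
    exact ⟨n, hz, by linarith⟩
  · rintro ⟨n, h, _⟩; exact h

lemma Ctx.mono_sub {Ω : Set ℂ} {u : ℂ → ℝ} :
    Monotone fun n : ℕ => {z | z ∈ Ω ∧ u z < -(1 / ((n:ℝ) + 1))} := by
  intro m n hmn z hz
  refine ⟨hz.1, hz.2.trans_le ?_⟩
  have : (1:ℝ) / (n + 1) ≤ 1 / (m + 1) := Nat.one_div_le_one_div hmn
  linarith

lemma Ctx.mass {Ω u ν} (cx : Ctx Ω u ν) {r : ℝ} {νr : Measure ℂ}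
    (hr : r < 0) (h0 : u 0 < r) (hνr : IsRieszMeasure (fun z => max (u z) r) Ω νr) :
    νr univ ≤ ν univ := by
  have : IsFiniteMeasure ν := ⟨cx.fin⟩
  have h1 : νr univ ≤ νr Ω := by
    rw [← union_compl_self Ω]
    exact (measure_union_le _ _).trans (by rw [hνr.1, add_zero])
  refine h1.trans ?_
  have key : ∀ n : ℕ, νr {z | z ∈ Ω ∧ u z < -(1 / ((n:ℝ) + 1))} ≤ ν univ := by
    intro n
    set s := max r (-(1 / ((n:ℝ) + 1))) with hs
    have hs0 : s < 0 := max_lt hr (neg_lt_zero.2 Nat.one_div_pos_of_nat)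
    obtain ⟨χ, hχ⟩ := cx.cut hs0
    have hχr : Cut Ω {z | z ∈ Ω ∧ u z < r} χ :=
      hχ.mono fun z hz => ⟨hz.1, hz.2.trans_le (le_max_left _ _)⟩
    calc νr {z | z ∈ Ω ∧ u z < -(1 / ((n:ℝ) + 1))}
        = ∫⁻ z, indicator {z | z ∈ Ω ∧ u z < -(1 / ((n:ℝ) + 1))} 1 z ∂νr :=
          (lintegral_indicator_one (cx.sub_open _).measurableSet).symm
      _ ≤ ∫⁻ z, ENNReal.ofReal (χ z) ∂νr := by
          refine lintegral_mono (indicator_le' (fun z hz => ?_) fun z _ => zero_le)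
          rw [hχ.one z ⟨hz.1, hz.2.trans_le (le_max_right _ _)⟩]; simp
      _ = ENNReal.ofReal (∫ z, χ z ∂νr) := (ofReal_integral_eq_lintegral_ofReal
          (cx.integrable_cut hr h0 hχr hνr) (ae_of_all _ hχ.nonneg)).symm
      _ = ENNReal.ofReal (∫ z, χ z ∂ν) := by rw [cx.int_one hχr hνr]
      _ = ∫⁻ z, ENNReal.ofReal (χ z) ∂ν := ofReal_integral_eq_lintegral_ofReal
          (hχ.smooth.continuous.integrable_of_hasCompactSupport hχ.cpt) (ae_of_all _ hχ.nonneg)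
      _ ≤ ∫⁻ z, 1 ∂ν := lintegral_mono fun z => by simpa using hχ.le_one z
      _ = ν univ := by simp
  calc νr Ω = νr (⋃ n : ℕ, {z | z ∈ Ω ∧ u z < -(1 / ((n:ℝ) + 1))}) := by rw [← cx.union]
    _ = ⨆ n : ℕ, νr {z | z ∈ Ω ∧ u z < -(1 / ((n:ℝ) + 1))} := Ctx.mono_sub.measure_iUnion
    _ ≤ ν univ := iSup_le key

lemma Ctx.null {Ω u ν} (cx : Ctx Ω u ν) {r : ℝ} {νr : Measure ℂ}
    (hr : r < 0) (h0 : u 0 < r) (hνr : IsRieszMeasure (fun z => max (u z) r) Ω νr)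
    {K : Set ℂ} (hK : IsCompact K) (hKs : K ⊆ {z | z ∈ Ω ∧ u z < r}) : νr K = 0 := by
  have : IsFiniteMeasure νr := ⟨(cx.mass hr h0 hνr).trans_lt cx.fin⟩
  obtain ⟨φ, hφ⟩ := exists_cut (cx.sub_open r) hK hKs
  have hi : Integrable φ νr := hφ.smooth.continuous.integrable_of_hasCompactSupport hφ.cpt
  have e1 : ∫ z, φ z ∂νr = 0 := by
    rw [hνr.2 φ hφ.smooth hφ.cpt (hφ.supp.trans fun z hz => hz.1)]
    have : ∫ z in Ω, max (u z) r * lap φ z = ∫ z in Ω, r * lap φ z := by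
      refine setIntegral_congr_fun cx.op.measurableSet fun z hz => ?_
      by_cases h : z ∈ tsupport φ
      · simp only [max_eq_right (hφ.supp h).2.le]
      · simp only [lap_zero_off h, mul_zero]
    rw [this, integral_const_mul, setIntegral_eq_integral_of_forall_compl_eq_zero,
      integral_lap hφ.smooth hφ.cpt]
    · simp
    · intro z hz
      exact lap_zero_off fun h => hz (hφ.supp h).1
  have e2 : ∫⁻ z, ENNReal.ofReal (φ z) ∂νr = 0 := by
    rw [← ofReal_integral_eq_lintegral_ofReal hi (ae_of_all _ hφ.nonneg), e1]; simp
  refine le_antisymm ?_ zero_le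
  calc νr K = ∫⁻ z, indicator K 1 z ∂νr := (lintegral_indicator_one hK.measurableSet).symm
    _ ≤ ∫⁻ z, ENNReal.ofReal (φ z) ∂νr := by
          refine lintegral_mono (indicator_le' (fun z hz => ?_) fun z _ => zero_le)
          rw [hφ.one z hz]; simp
    _ = 0 := e2

lemma Ctx.nu_pos {Ω u ν} (cx : Ctx Ω u ν) {r : ℝ} {νr : Measure ℂ}
    (hr : r < 0) (h0 : u 0 < r) (hνr : IsRieszMeasure (fun z => max (u z) r) Ω νr) :
    ν univ ≠ 0 := by
  intro h
  have hm := cx.mass hr h0 hνr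
  rw [h] at hm
  have e1 : ν = 0 := Measure.measure_univ_eq_zero.1 h
  have e2 : νr = 0 := Measure.measure_univ_eq_zero.1 (le_antisymm hm zero_le)
  obtain ⟨χ, hχ⟩ := cx.cut hr
  have := cx.int_sq hr h0 hχ hνr
  simp [e1, e2] at this

lemma le_sub_add {m n : Measure ℂ} [IsFiniteMeasure m] [IsFiniteMeasure n] :
    m ≤ (m - n) + n := by
  obtain ⟨s, hs, h1, h2⟩ := hahn_decomposition m n
  have a1 : n.restrict s ≤ m.restrict s := by
    refine Measure.le_iff.2 fun t ht => ?_
    rw [Measure.restrict_apply ht, Measure.restrict_apply ht]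
    exact h1 _ (ht.inter hs) inter_subset_right
  have a2 : m.restrict sᶜ ≤ n.restrict sᶜ := by
    refine Measure.le_iff.2 fun t ht => ?_
    rw [Measure.restrict_apply ht, Measure.restrict_apply ht]
    exact h2 _ (ht.inter hs.compl) inter_subset_right
  have e : (m.restrict s - n.restrict s) + n.restrict s = m.restrict s :=
    Measure.sub_add_cancel_of_le a1
  calc m = m.restrict s + m.restrict sᶜ := (Measure.restrict_add_restrict_compl hs).symm
    _ ≤ (m.restrict s - n.restrict s) + n.restrict s + n.restrict sᶜ := by
        rw [e]; exact add_le_add le_rfl a2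
    _ ≤ (m.restrict s - n.restrict s) + (m - n).restrict sᶜ + (n.restrict s + n.restrict sᶜ) := by
        rw [add_assoc]
        exact add_le_add (Measure.le_add_right le_rfl) le_rfl
    _ = (m - n) + n := by
        rw [← Measure.restrict_sub_eq_restrict_sub_restrict hs,
          Measure.restrict_add_restrict_compl hs, Measure.restrict_add_restrict_compl hs]

lemma Ctx.mu_mass {Ω u ν} (cx : Ctx Ω u ν) {r : ℝ} {μ : Measure ℂ}
    (hr : r < 0) (h0 : u 0 < r) (hμ : IsMAMeasure u Ω ν r μ) : μ univ ≤ ν univ := by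
  obtain ⟨νr, hνr, rfl⟩ := hμ
  exact (Measure.sub_le univ).trans (cx.mass hr h0 hνr)

lemma mu_compl {Ω u ν} {r : ℝ} {μ : Measure ℂ} (hμ : IsMAMeasure u Ω ν r μ) : μ Ωᶜ = 0 := by
  obtain ⟨νr, hνr, rfl⟩ := hμ
  exact le_antisymm ((Measure.sub_le _).trans hνr.1.le) zero_le

lemma Ctx.mu_null {Ω u ν} (cx : Ctx Ω u ν) {r : ℝ} {μ : Measure ℂ}
    (hr : r < 0) (h0 : u 0 < r) (hμ : IsMAMeasure u Ω ν r μ)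
    {K : Set ℂ} (hK : IsCompact K) (hKs : K ⊆ {z | z ∈ Ω ∧ u z < r}) : μ K = 0 := by
  obtain ⟨νr, hνr, rfl⟩ := hμ
  exact le_antisymm ((Measure.sub_le _).trans (cx.null hr h0 hνr hK hKs).le) zero_le

lemma Ctx.psi_ineq {Ω u ν} (cx : Ctx Ω u ν) {r : ℝ} {μ : Measure ℂ}
    (hr : r < 0) (h0 : u 0 < r) (hμ : IsMAMeasure u Ω ν r μ) {χ Ψ : ℂ → ℝ}
    (hχ : Cut Ω {z | z ∈ Ω ∧ u z < r} χ)
    (hΨ : ContDiffOn ℝ 2 Ψ Ω) (hnn : ∀ z ∈ Ω, 0 ≤ Ψ z) (hlap : ∀ z ∈ Ω, 0 ≤ lap Ψ z) :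
    ∫ z in {z | z ∈ Ω ∧ u z < r}, Ψ z ∂ν ≤ ∫ z, χ z * Ψ z ∂μ := by
  obtain ⟨νr, hνr, rfl⟩ := hμ
  have f1 : IsFiniteMeasure ν := ⟨cx.fin⟩
  have f2 : IsFiniteMeasure νr := ⟨(cx.mass hr h0 hνr).trans_lt cx.fin⟩
  set n := ν.restrict {z | z ∈ Ω ∧ r ≤ u z} with hn
  have hmB : MeasurableSet {z | z ∈ Ω ∧ u z < r} := (cx.sub_open r).measurableSet
  have hmc : MeasurableSet {z | z ∈ Ω ∧ r ≤ u z} := by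
    have : {z | z ∈ Ω ∧ r ≤ u z} = Ω \ {z | z ∈ Ω ∧ u z < r} := by
      ext z; simp only [mem_ofPred_eq, Set.mem_sdiff, not_and, not_lt]
      exact ⟨fun h => ⟨h.1, fun _ => h.2⟩, fun h => ⟨h.1, h.2 h.1⟩⟩
    rw [this]; exact cx.op.measurableSet.diff hmB
  have f3 : IsFiniteMeasure (νr - n) := ⟨(Measure.sub_le univ).trans_lt (measure_lt_top _ _)⟩
  have I : ∀ m : Measure ℂ, m univ < ⊤ → Integrable (fun z => χ z * Ψ z) m := fun m hm =>
    hχ.integrable cx.op hΨ hm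
  have nn : ∀ z, 0 ≤ χ z * Ψ z := by
    intro z
    by_cases hz : z ∈ Ω
    · exact mul_nonneg (hχ.nonneg z) (hnn z hz)
    · rw [image_eq_zero_of_notMem_tsupport (fun h => hz (hχ.supp h)), zero_mul]
  have s1 : ∫ z, χ z * Ψ z ∂ν ≤ ∫ z, χ z * Ψ z ∂νr := by
    rw [cx.ident hχ hνr hΨ]
    have : 0 ≤ ∫ z in Ω, (max (u z) r - u z) * lap Ψ z :=
      setIntegral_nonneg cx.op.measurableSet fun z hz =>
        mul_nonneg (sub_nonneg.2 (le_max_left _ _)) (hlap z hz)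
    linarith
  have s2 : ∫ z, χ z * Ψ z ∂νr ≤ ∫ z, χ z * Ψ z ∂(νr - n) + ∫ z, χ z * Ψ z ∂n := by
    rw [← integral_add_measure (I _ (measure_lt_top _ _)) (I _ (measure_lt_top _ _))]
    exact integral_mono_measure le_sub_add (ae_of_all _ nn) (I _ (measure_lt_top _ _))
  have s3 : ∫ z, χ z * Ψ z ∂ν = ∫ z in {z | z ∈ Ω ∧ u z < r}, χ z * Ψ z ∂ν
      + ∫ z, χ z * Ψ z ∂n := by
    rw [hn, ← setIntegral_union _ hmc (I _ (measure_lt_top _ _)).integrableOn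
      (I _ (measure_lt_top _ _)).integrableOn]
    · have : {z | z ∈ Ω ∧ u z < r} ∪ {z | z ∈ Ω ∧ r ≤ u z} = Ω := by
        ext z; simp only [mem_union, mem_ofPred_eq, ← and_or_left]
        exact ⟨fun h => h.1, fun h => ⟨h, lt_or_ge _ _⟩⟩
      rw [this, setIntegral_eq_integral_of_forall_compl_eq_zero]
      intro z hz
      rw [image_eq_zero_of_notMem_tsupport (fun h => hz (hχ.supp h)), zero_mul]
    · rw [Set.disjoint_left]; rintro z ⟨_, h⟩ ⟨_, h'⟩; linarith
  have s4 : ∫ z in {z | z ∈ Ω ∧ u z < r}, χ z * Ψ z ∂ν = ∫ z in {z | z ∈ Ω ∧ u z < r}, Ψ z ∂ν :=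
    setIntegral_congr_fun hmB fun z hz => by simp [hχ.one z hz]
  linarith

lemma Conf.cpt {Ω ψ G} (cf : Conf Ω ψ G) {R : ℝ} (hR : R < 1) :
    IsCompact {z | z ∈ Ω ∧ ‖G z‖ ≤ R} := by
  have e : {z | z ∈ Ω ∧ ‖G z‖ ≤ R} = ψ '' closedBall 0 R := by
    ext z; constructor
    · rintro ⟨hz, h⟩; exact ⟨G z, by simpa using h, cf.ψG z hz⟩
    · rintro ⟨w, hw, rfl⟩
      have hw' : w ∈ ball (0:ℂ) 1 := closedBall_subset_ball hR hw
      exact ⟨cf.mψ w hw', by rw [cf.Gψ w hw']; simpa using hw⟩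
  rw [e]
  exact (isCompact_closedBall 0 R).image_of_continuousOn
    (cf.dψ.continuousOn.mono (closedBall_subset_ball hR))

lemma Ctx.sub_of_compact {Ω u ν} (cx : Ctx Ω u ν) {K : Set ℂ} (hK : IsCompact K) (hKΩ : K ⊆ Ω) :
    ∃ s < 0, ∀ z ∈ K, u z < s := by
  rcases K.eq_empty_or_nonempty with rfl | hne
  · exact ⟨-1, by norm_num, by simp⟩
  · obtain ⟨z, hz, hmax⟩ := hK.exists_isMaxOn hne (cx.ex.subh.1.mono hKΩ)
    have := cx.ex.neg z (hKΩ hz)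
    exact ⟨u z / 2, by linarith, fun y hy => by have := hmax hy; simp only [mem_ofPred_eq] at this; linarith⟩

lemma Ctx.exists_R0 {Ω u ν ψ G} (cx : Ctx Ω u ν) (cf : Conf Ω ψ G) (h : ν univ ≠ 0) :
    ∃ R0 : ℝ, 0 < R0 ∧ R0 < 1 ∧ ν {z | z ∈ Ω ∧ ‖G z‖ ≤ R0} ≠ 0 := by
  by_contra hcon
  push Not at hcon
  apply h
  have h1 : ∀ n : ℕ, ν {z | z ∈ Ω ∧ ‖G z‖ ≤ 1 - 1 / ((n:ℝ) + 2)} = 0 := by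
    intro n
    have : (1:ℝ) / (n + 2) < 1 := by rw [div_lt_one (by positivity)]; linarith [Nat.cast_nonneg (α := ℝ) n]
    exact hcon _ (by linarith) (by have : (0:ℝ) < 1 / (n + 2) := by positivity
                                   linarith)
  have h2 := measure_iUnion_null h1
  have h3 : Ω ⊆ ⋃ n : ℕ, {z | z ∈ Ω ∧ ‖G z‖ ≤ 1 - 1 / ((n:ℝ) + 2)} := by
    intro z hz
    have hG : ‖G z‖ < 1 := by simpa using cf.mG z hz
    obtain ⟨n, hn⟩ := exists_nat_one_div_lt (sub_pos.2 hG)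
    refine mem_iUnion.2 ⟨n, hz, ?_⟩
    have : (1:ℝ) / (n + 2) ≤ 1 / (n + 1) := by gcongr; norm_num
    linarith
  have h4 := measure_mono_null h3 h2
  rw [← union_compl_self Ω]
  exact measure_union_null h4 cx.rz.1

lemma Phi_ge {p ε : ℝ} (hp : 1 ≤ p) (hε : 0 < ε) (f : ℂ → ℂ) (z : ℂ) : ‖f z‖ ^ p ≤ Phi p ε f z := by
  have h1 : ‖f z‖ ^ p = (‖f z‖ ^ 2) ^ (p/2) := by
    rw [← Real.rpow_natCast_mul (norm_nonneg _)]; congr 1; push_cast; ring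
  rw [h1]
  exact Real.rpow_le_rpow (by positivity) (by linarith) (by linarith)

lemma Phi_le {p δ : ℝ} (hp : 1 ≤ p) (hδ : 0 < δ) (f : ℂ → ℂ) (z : ℂ) :
    Phi p (δ ^ (2/p)) f z ≤ 2 ^ (p-1) * (‖f z‖ ^ p + δ) := by
  set b := δ ^ (1/p) with hb
  have hb0 : 0 ≤ b := by positivity
  have e1 : δ ^ (2/p) = b ^ 2 := by
    rw [hb, ← Real.rpow_mul_natCast hδ.le]; congr 1; push_cast; ring
  have e2 : b ^ p = δ := by
    rw [hb, ← Real.rpow_mul hδ.le, one_div_mul_cancel (by linarith), Real.rpow_one]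
  have e3 : (‖f z‖ + b) ^ p = ((‖f z‖ + b) ^ 2) ^ (p/2) := by
    rw [← Real.rpow_natCast_mul (by positivity)]; congr 1; push_cast; ring
  calc Phi p (δ ^ (2/p)) f z ≤ (‖f z‖ + b) ^ p := by
        rw [e3, Phi, e1]
        exact Real.rpow_le_rpow (by positivity) (by nlinarith [norm_nonneg (f z)]) (by linarith)
    _ ≤ 2 ^ (p-1) * (‖f z‖ ^ p + b ^ p) := by
        have := NNReal.rpow_add_le_mul_rpow_add_rpow ⟨‖f z‖, norm_nonneg _⟩ ⟨b, hb0⟩ hp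
        exact_mod_cast this
    _ = _ := by rw [e2]

lemma Phi_nonneg {p ε : ℝ} (hε : 0 < ε) (f : ℂ → ℂ) (z : ℂ) : 0 ≤ Phi p ε f z := by
  rw [Phi]; positivity

lemma glue_psi {Φ H N : ℂ → ℝ} {η ρ : ℝ} {z : ℂ} (hη : 0 < η)
    (hΦ : ContDiffAt ℝ 2 Φ z) (hH : ContDiffAt ℝ 2 H z)
    (hl : 0 ≤ lap Φ z) (hl' : lap H z = 0) (hN : ContinuousAt N z)
    (hb : N z = ρ → H z < Φ z) :
    ContDiffAt ℝ 2 (fun w => if N w < ρ then Φ w + kap η (H w - Φ w) else Φ w) z ∧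
      0 ≤ lap (fun w => if N w < ρ then Φ w + kap η (H w - Φ w) else Φ w) z := by
  rcases lt_trichotomy (N z) ρ with h | h | h
  · have e : (fun w => if N w < ρ then Φ w + kap η (H w - Φ w) else Φ w) =ᶠ[𝓝 z]
        fun w => Φ w + kap η (H w - Φ w) := by
      filter_upwards [hN.eventually_lt_const h] with w hw
      rw [if_pos hw]
    refine ⟨ContDiffAt.congr_of_eventuallyEq ?_ e, ?_⟩
    · exact hΦ.add ((kap_contDiff hη).contDiffAt.comp z (hH.sub hΦ))
    · rw [lap_congr e]; exact lap_glue_nonneg hη hΦ hH hl hl'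
  · have e : (fun w => if N w < ρ then Φ w + kap η (H w - Φ w) else Φ w) =ᶠ[𝓝 z] Φ := by
      filter_upwards [hH.continuousAt.eventually_lt hΦ.continuousAt (hb h)] with w hw
      rw [kap_zero (by linarith)]; simp
    exact ⟨hΦ.congr_of_eventuallyEq e, by rw [lap_congr e]; exact hl⟩
  · have e : (fun w => if N w < ρ then Φ w + kap η (H w - Φ w) else Φ w) =ᶠ[𝓝 z] Φ := by
      filter_upwards [hN.eventually_const_lt h] with w hw
      rw [if_neg (not_lt.2 hw.le)]
    exact ⟨hΦ.congr_of_eventuallyEq e, by rw [lap_congr e]; exact hl⟩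

lemma step {Ω u ν ψ G} (cx : Ctx Ω u ν) (cf : Conf Ω ψ G) {μfam : ℝ → Measure ℂ}
    (hμ : ∀ r : ℝ, r < 0 → IsMAMeasure u Ω ν r (μfam r)) {p : ℝ} (hp : 1 ≤ p)
    {R0 : ℝ} (hR0 : 0 < R0) (hR1 : R0 < 1)
    {f : ℂ → ℂ} (hf : DifferentiableOn ℂ f Ω) {N δ ρ : ℝ} (hN : 0 ≤ N) (hδ : 0 < δ)
    (hρ : (1 + R0) / 2 ≤ ρ) (hρ1 : ρ < 1)
    (hev : ∀ᶠ r in 𝓝[<] (0:ℝ), ∫⁻ z, ENNReal.ofReal (‖f z‖ ^ p) ∂(μfam r) ≤ ENNReal.ofReal (N + δ)) :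
    ∃ P : ℂ → ℂ, Differentiable ℂ P ∧ (P 0).im = 0 ∧
      (∀ w ∈ sphere (0:ℂ) ρ, ‖f (ψ w)‖ ^ p ≤ (P w).re) ∧
      (ν {z | z ∈ Ω ∧ ‖G z‖ ≤ R0}).toReal * ((1 - R0) / 4 * (P 0).re - 5 * δ) ≤
        2 ^ (p - 1) * (N + δ + δ * (ν univ).toReal) := by
  have fν : IsFiniteMeasure ν := ⟨cx.fin⟩
  have hρ0 : 0 < ρ := by linarith
  have hRρ : R0 < ρ := by linarith
  set ε := δ ^ (2/p) with hε
  have hε0 : 0 < ε := by positivity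
  have hfa : ∀ z ∈ Ω, AnalyticAt ℂ f z := hf.analyticOnNhd cx.op
  have hGa : ∀ z ∈ Ω, AnalyticAt ℂ G z := cf.dG.analyticOnNhd cx.op
  set Φ := Phi p ε f with hΦd
  have hΦ : ∀ z ∈ Ω, ContDiffAt ℝ 2 Φ z := fun z hz => contDiffAt_Phi hε0 (hfa z hz)
  have hsb : sphere (0:ℂ) ρ ⊆ ball 0 1 := sphere_subset_closedBall.trans (closedBall_subset_ball hρ1)
  have hgc : ContinuousOn (fun w => Φ (ψ w) - 2 * δ) (sphere 0 ρ) := by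
    refine ContinuousOn.sub ?_ continuousOn_const
    have h1 : ContinuousOn Φ Ω := fun z hz => (hΦ z hz).continuousAt.continuousWithinAt
    exact h1.comp (cf.dψ.continuousOn.mono hsb) fun w hw => cf.mψ w (hsb hw)
  obtain ⟨P0, hP0, hP0s⟩ := trig_approx hρ0 hgc hδ
  set P : ℂ → ℂ := fun w => P0 w + (3 * δ : ℝ) - (P0 0).im * I with hPd
  have hPre : ∀ w, (P w).re = (P0 w).re + 3 * δ := by intro w; simp [hPd]
  have hPdiff : Differentiable ℂ P := (hP0.add_const _).sub_const _
  have hPs : ∀ w ∈ sphere (0:ℂ) ρ, Φ (ψ w) ≤ (P w).re := by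
    intro w hw; rw [hPre]; have := (abs_lt.1 (hP0s w hw)).1; linarith
  have hPan : AnalyticOnNhd ℂ P (closedBall 0 ρ) := fun w _ => hPdiff.analyticAt w
  have hPnn : ∀ w ∈ sphere (0:ℂ) ρ, 0 ≤ (P w).re := fun w hw =>
    (Phi_nonneg hε0 f _).trans (hPs w hw)
  have hP00 : 0 ≤ (P 0).re := re_nonneg_inside hPan hPnn (by simpa using hρ0)
  refine ⟨P, hPdiff, by simp [hPd], fun w hw => (Phi_ge hp hε0 f _).trans (hPs w hw), ?_⟩
  set H : ℂ → ℝ := fun z => (P0 (G z)).re with hHd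
  have hHa : ∀ z ∈ Ω, AnalyticAt ℂ (fun z => P0 (G z)) z := fun z hz =>
    (hP0.analyticAt _).comp (hGa z hz)
  set Ψ : ℂ → ℝ := fun w => if ‖G w‖ < ρ then Φ w + kap δ (H w - Φ w) else Φ w with hΨd
  have hgl : ∀ z ∈ Ω, ContDiffAt ℝ 2 Ψ z ∧ 0 ≤ lap Ψ z := by
    intro z hz
    refine glue_psi hδ (hΦ z hz) (contDiffAt_re_hol (hHa z hz))
      (lap_Phi_nonneg (by linarith) hε0 (hfa z hz)) (lap_re_hol (hHa z hz))
      (hGa z hz).continuousAt.norm fun hn => ?_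
    have := (abs_lt.1 (hP0s (G z) (by simpa using hn))).2
    rw [cf.ψG z hz] at this
    simp only [hHd]; linarith
  have hΨc : ContDiffOn ℝ 2 Ψ Ω := fun z hz => (hgl z hz).1.contDiffWithinAt
  have hΨΦ : ∀ z, Φ z ≤ Ψ z := by
    intro z; simp only [hΨd]; split_ifs
    · linarith [kap_nonneg hδ (H z - Φ z)]
    · exact le_rfl
  have hΨnn : ∀ z, 0 ≤ Ψ z := fun z => (Phi_nonneg hε0 f z).trans (hΨΦ z)
  have hKρ := cf.cpt hρ1
  obtain ⟨s, hs, hus⟩ := cx.sub_of_compact hKρ fun z hz => hz.1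
  have hu0 := cx.ex.neg 0 cx.z0
  obtain ⟨r, hrint, hrneg, hrs, hr0⟩ : ∃ r, (∫⁻ z, ENNReal.ofReal (‖f z‖ ^ p) ∂(μfam r) ≤
      ENNReal.ofReal (N + δ)) ∧ r < 0 ∧ s < r ∧ u 0 < r := by
    have e2 : ∀ᶠ r in 𝓝[<] (0:ℝ), r < 0 := self_mem_nhdsWithin
    have e3 : ∀ᶠ r in 𝓝[<] (0:ℝ), s < r := nhdsWithin_le_nhds (lt_mem_nhds hs)
    have e4 : ∀ᶠ r in 𝓝[<] (0:ℝ), u 0 < r := nhdsWithin_le_nhds (lt_mem_nhds hu0)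
    obtain ⟨r, ⟨h1, h2⟩, h3, h4⟩ := ((hev.and e2).and (e3.and e4)).exists
    exact ⟨r, h1, h2, h3, h4⟩
  have hKr : {z | z ∈ Ω ∧ ‖G z‖ ≤ ρ} ⊆ {z | z ∈ Ω ∧ u z < r} := fun z hz =>
    ⟨hz.1, (hus z hz).trans hrs⟩
  obtain ⟨χ, hχ⟩ := cx.cut hrneg
  have hMA := hμ r hrneg
  have fμ : IsFiniteMeasure (μfam r) := ⟨(cx.mu_mass hrneg hr0 hMA).trans_lt cx.fin⟩
  have main := cx.psi_ineq hrneg hr0 hMA hχ hΨc (fun z _ => hΨnn z) (fun z hz => (hgl z hz).2)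
  -- left side
  have hmB : MeasurableSet {z | z ∈ Ω ∧ u z < r} := (cx.sub_open r).measurableSet
  have hK' := cf.cpt hR1
  have hKK : {z | z ∈ Ω ∧ ‖G z‖ ≤ R0} ⊆ {z | z ∈ Ω ∧ u z < r} := fun z hz =>
    hKr ⟨hz.1, hz.2.trans hRρ.le⟩
  have hΨi : IntegrableOn Ψ {z | z ∈ Ω ∧ u z < r} ν := by
    refine ((hχ.integrable cx.op hΨc cx.fin).integrableOn).congr_fun (fun z hz => ?_) hmB
    simp [hχ.one z hz]
  have L : (ν {z | z ∈ Ω ∧ ‖G z‖ ≤ R0}).toReal * ((1 - R0) / 4 * (P 0).re - 5 * δ) ≤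
      ∫ z in {z | z ∈ Ω ∧ u z < r}, Ψ z ∂ν := by
    calc _ = ∫ z in {z | z ∈ Ω ∧ ‖G z‖ ≤ R0}, ((1 - R0) / 4 * (P 0).re - 5 * δ) ∂ν := by
          rw [setIntegral_const]; rfl
      _ ≤ ∫ z in {z | z ∈ Ω ∧ ‖G z‖ ≤ R0}, Ψ z ∂ν := by
          refine setIntegral_mono_on (integrable_const _) (hΨi.mono_set hKK) hK'.measurableSet
            fun z hz => ?_
          have hlt : ‖G z‖ < ρ := hz.2.trans_lt hRρ
          have h1 := (harnack hPan hPnn (w := G z) (by simpa using hlt)).1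
          have h2 : (1 - R0) / 4 ≤ (ρ - ‖G z‖) / (ρ + ‖G z‖) := by
            have := norm_nonneg (G z)
            have := hz.2
            rw [le_div_iff₀ (by linarith)]; nlinarith
          have h3 := mul_le_mul_of_nonneg_right h2 hP00
          have h4 := kap_ge hδ (H z - Φ z)
          have h5 : Ψ z = Φ z + kap δ (H z - Φ z) := by simp only [hΨd]; rw [if_pos hlt]
          have h6 := hPre (G z)
          rw [h5]
          simp only [hHd] at h4 ⊢
          linarith
      _ ≤ _ := setIntegral_mono_set hΨi (ae_of_all _ hΨnn) (ae_of_all _ hKK)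
  -- right side
  have hnull : μfam r {z | z ∈ Ω ∧ ‖G z‖ ≤ ρ} = 0 := cx.mu_null hrneg hr0 hMA hKρ hKr
  have R1 : ∫ z, χ z * Ψ z ∂(μfam r) = ∫ z, χ z * Φ z ∂(μfam r) := by
    refine integral_congr_ae ?_
    filter_upwards [compl_mem_ae_iff.2 hnull, compl_mem_ae_iff.2 (mu_compl hMA)] with z hz hz2
    have hzΩ : z ∈ Ω := by simpa using hz2
    have : ¬ ‖G z‖ < ρ := fun h => hz ⟨hzΩ, h.le⟩
    simp only [hΨd, if_neg this]
  have hχΦ : Integrable (fun z => χ z * Φ z) (μfam r) :=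
    hχ.integrable cx.op (fun z hz => (hΦ z hz).contDiffWithinAt) (measure_lt_top _ _)
  have R2 : ∫ z, χ z * Φ z ∂(μfam r) ≤ 2 ^ (p - 1) * (N + δ + δ * (ν univ).toReal) := by
    have hV : 0 ≤ (ν univ).toReal := ENNReal.toReal_nonneg
    rw [integral_eq_lintegral_of_nonneg_ae
      (ae_of_all _ fun z => mul_nonneg (hχ.nonneg z) (Phi_nonneg hε0 f z)) hχΦ.1]
    refine ENNReal.toReal_le_of_le_ofReal (by positivity) ?_
    calc ∫⁻ z, ENNReal.ofReal (χ z * Φ z) ∂(μfam r)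
        ≤ ∫⁻ z, ENNReal.ofReal (2 ^ (p-1)) * (ENNReal.ofReal (‖f z‖ ^ p) + ENNReal.ofReal δ) ∂(μfam r) := by
          refine lintegral_mono fun z => ?_
          rw [← ENNReal.ofReal_add (by positivity) hδ.le, ← ENNReal.ofReal_mul (by positivity)]
          refine ENNReal.ofReal_le_ofReal ?_
          refine le_trans ?_ (Phi_le hp hδ f z)
          exact mul_le_of_le_one_left (Phi_nonneg hε0 f z) (hχ.le_one z)
      _ = ENNReal.ofReal (2 ^ (p-1)) * (∫⁻ z, ENNReal.ofReal (‖f z‖ ^ p) ∂(μfam r) +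
            ENNReal.ofReal δ * μfam r univ) := by
          rw [lintegral_const_mul' _ _ ENNReal.ofReal_ne_top,
            lintegral_add_right _ measurable_const, lintegral_const]
      _ ≤ ENNReal.ofReal (2 ^ (p-1)) * (ENNReal.ofReal (N + δ) +
            ENNReal.ofReal δ * ENNReal.ofReal (ν univ).toReal) := by
          rw [ENNReal.ofReal_toReal cx.fin.ne]
          exact mul_le_mul' le_rfl (add_le_add hrint
            (mul_le_mul' le_rfl (cx.mu_mass hrneg hr0 hMA)))
      _ = ENNReal.ofReal (2 ^ (p - 1) * (N + δ + δ * (ν univ).toReal)) := by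
          rw [← ENNReal.ofReal_mul hδ.le, ← ENNReal.ofReal_add (by positivity) (by positivity),
            ← ENNReal.ofReal_mul (by positivity)]
  calc _ ≤ _ := L
    _ ≤ _ := main
    _ = _ := R1
    _ ≤ _ := R2

lemma montel {P : ℕ → ℂ → ℂ} (hP : ∀ n, Differentiable ℂ (P n))
    (hb : ∀ R : ℝ, 0 < R → R < 1 → ∃ M : ℝ, ∀ᶠ n in atTop, ∀ w ∈ ball (0:ℂ) R, ‖P n w‖ ≤ M) :
    ∃ Q : ℂ → ℂ, AnalyticOnNhd ℂ Q (ball 0 1) ∧ ∀ w ∈ ball (0:ℂ) 1,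
      Tendsto (fun n => P n w) (hyperfilter ℕ) (𝓝 (Q w)) := by
  have hle : (hyperfilter ℕ : Filter ℕ) ≤ atTop := by
    rw [← Nat.cofinite_eq_atTop]; exact hyperfilter_le_cofinite
  have key : ∀ w ∈ ball (0:ℂ) 1, ∃ q, Tendsto (fun n => P n w) (hyperfilter ℕ) (𝓝 q) := by
    intro w hw
    have hw1 : ‖w‖ < 1 := by simpa using hw
    have hn := norm_nonneg w
    obtain ⟨M, hM⟩ := hb ((1 + ‖w‖)/2) (by linarith) (by linarith)
    have h1 : ∀ᶠ n in (hyperfilter ℕ : Filter ℕ), P n w ∈ closedBall (0:ℂ) M := by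
      filter_upwards [hle hM] with n hn
      have := hn w (by simp; linarith)
      simpa using this
    obtain ⟨q, _, hq⟩ := (isCompact_closedBall (0:ℂ) M).ultrafilter_le_nhds
      ((hyperfilter ℕ).map (fun n => P n w)) (by rw [Ultrafilter.coe_map, le_principal_iff]; exact h1)
    exact ⟨q, hq⟩
  choose! Q hQ using key
  refine ⟨Q, ?_, hQ⟩
  refine DifferentiableOn.analyticOnNhd ?_ isOpen_ball
  have : TendstoLocallyUniformlyOn P Q (hyperfilter ℕ : Filter ℕ) (ball 0 1) := by
    rw [Metric.tendstoLocallyUniformlyOn_iff]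
    intro ε hε x hx
    have hx1 : ‖x‖ < 1 := by simpa using hx
    have hn := norm_nonneg x
    obtain ⟨M, hM⟩ := hb ((1 + ‖x‖)/2) (by linarith) (by linarith)
    set M' := max M 0 with hM'
    have hM0 : 0 ≤ M' := le_max_right _ _
    set d := (1 - ‖x‖)/2 with hd
    have hd0 : 0 < d := by linarith
    set η := min (d/2) (ε * d / (4 * (2 * M' + 1))) with hη
    have hη0 : 0 < η := by positivity
    have hηd : η < d := (min_le_left _ _).trans_lt (by linarith)
    have hηε : (2 * M' + 1) / d * η ≤ ε / 4 := by
      have : η ≤ ε * d / (4 * (2 * M' + 1)) := min_le_right _ _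
      calc (2 * M' + 1) / d * η ≤ (2 * M' + 1) / d * (ε * d / (4 * (2 * M' + 1))) := by gcongr
        _ = ε / 4 := by field_simp
    have hsub : ball x d ⊆ ball 0 ((1 + ‖x‖)/2) := by
      intro y hy
      have h1 : ‖y - x‖ < d := by simpa [dist_eq_norm] using hy
      have h2 : ‖y‖ ≤ ‖y - x‖ + ‖x‖ := by simpa using norm_add_le (y - x) x
      simp; linarith
    have hlip : ∀ᶠ n in (hyperfilter ℕ : Filter ℕ), ∀ y ∈ ball x η,
        dist (P n y) (P n x) ≤ ε / 4 := by
      filter_upwards [hle hM] with n hn y hy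
      have hyd : y ∈ ball x d := ball_subset_ball hηd.le hy
      have := Complex.dist_le_div_mul_dist_of_mapsTo_ball (f := P n) (c := x) (R₁ := d)
        (R₂ := 2 * M' + 1) (z := y) (hP n).differentiableOn (by
          intro v hv
          have h1 := hn v (hsub hv)
          have h2 := hn x (hsub (mem_ball_self hd0))
          have h3 : M ≤ M' := le_max_left _ _
          have := dist_le_norm_add_norm (P n v) (P n x)
          simp only [mem_ball, mem_closedBall]; linarith) hyd
      refine this.trans (le_trans ?_ hηε)
      have : dist y x ≤ η := (mem_ball.1 hy).le
      gcongr
    have hball : ∀ y ∈ ball x η, y ∈ ball (0:ℂ) 1 := fun y hy =>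
      ball_subset_ball (by linarith) (hsub (ball_subset_ball hηd.le hy))
    refine ⟨ball x η, mem_nhdsWithin_of_mem_nhds (ball_mem_nhds _ hη0), ?_⟩
    have hx2 : ∀ᶠ n in (hyperfilter ℕ : Filter ℕ), dist (P n x) (Q x) < ε / 4 :=
      (hQ x hx).eventually (ball_mem_nhds _ (by positivity))
    have hQl : ∀ y ∈ ball x η, dist (Q y) (Q x) ≤ ε / 4 := fun y hy =>
      le_of_tendsto ((hQ y (hball y hy)).dist (hQ x hx)) (hlip.mono fun n h => h y hy)
    filter_upwards [hlip, hx2] with n h1 h2 y hy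
    have a := h1 y hy
    have b := hQl y hy
    calc dist (Q y) (P n y) ≤ dist (Q y) (Q x) + dist (Q x) (P n y) := dist_triangle _ _ _
      _ ≤ dist (Q y) (Q x) + (dist (Q x) (P n x) + dist (P n x) (P n y)) := by
          gcongr; exact dist_triangle _ _ _
      _ < ε := by rw [dist_comm (Q x), dist_comm (P n x) (P n y)]; linarith
  exact this.differentiableOn (.of_forall fun n => (hP n).differentiableOn) isOpen_ball

lemma limit_major {Ω : Set ℂ} {ψ G : ℂ → ℂ} (hΩo : IsOpen Ω) (h0 : (0:ℂ) ∈ Ω) (cf : Conf Ω ψ G)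
    {p : ℝ} (hp : 1 ≤ p) {f : ℂ → ℂ} (hf : DifferentiableOn ℂ f Ω)
    {P : ℕ → ℂ → ℂ} (hP : ∀ n, Differentiable ℂ (P n)) (him : ∀ n, (P n 0).im = 0)
    {ρ : ℕ → ℝ} (hρ0 : ∀ n, 0 < ρ n) (hρ1 : ∀ n, ρ n < 1) (hρ : Tendsto ρ atTop (𝓝 1))
    (hmaj : ∀ n, ∀ w ∈ sphere (0:ℂ) (ρ n), ‖f (ψ w)‖ ^ p ≤ (P n w).re)
    {c : ℕ → ℝ} {c0 : ℝ} (hc : Tendsto c atTop (𝓝 c0)) (hPc : ∀ n, (P n 0).re ≤ c n) :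
    ∃ h, HarmonicOn h Ω ∧ (∀ z ∈ Ω, ‖f z‖ ^ p ≤ h z) ∧
      h 0 ≤ (1 + ‖G 0‖) / (1 - ‖G 0‖) * c0 := by
  have hle : (hyperfilter ℕ : Filter ℕ) ≤ atTop := by
    rw [← Nat.cofinite_eq_atTop]; exact hyperfilter_le_cofinite
  have hnn : ∀ n, ∀ w ∈ sphere (0:ℂ) (ρ n), 0 ≤ (P n w).re := fun n w hw =>
    (by positivity : (0:ℝ) ≤ ‖f (ψ w)‖ ^ p).trans (hmaj n w hw)
  have han : ∀ n (s : Set ℂ), AnalyticOnNhd ℂ (P n) s := fun n s z _ => (hP n).analyticAt z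
  have hin : ∀ n, ∀ w ∈ ball (0:ℂ) (ρ n), (P n w).re ≤ (ρ n + ‖w‖) / (ρ n - ‖w‖) * (P n 0).re :=
    fun n w hw => (harnack (han n _) (hnn n) hw).2
  have hP0 : ∀ n, 0 ≤ (P n 0).re := fun n => by
    have hh := pow_major (p := 1) (F := fun _ => 0) (P := P n) le_rfl analyticOnNhd_const (han n _)
      (by simpa using hnn n) (mem_ball_self (hρ0 n))
    simpa using hh
  have hcev : ∀ᶠ n in atTop, c n < c0 + 1 := hc.eventually (gt_mem_nhds (by linarith))
  have hc00 : 0 ≤ c0 := ge_of_tendsto' hc fun n => (hP0 n).trans (hPc n)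
  obtain ⟨Q, hQa, hQ⟩ := montel hP (by
    intro R hR0 hR1
    set R1 := (1 + R)/2 with hR1d
    set R2 := (1 + R1)/2 with hR2d
    set M := 2 / (R2 - R1) * (c0 + 1) with hMd
    have hM : 0 < M := by
      have : 0 < R2 - R1 := by linarith
      positivity
    refine ⟨2 * M / (R1 - R) + (c0 + 1) * 2 / (R1 - R), ?_⟩
    have hρe : ∀ᶠ n in atTop, R2 < ρ n := hρ.eventually (lt_mem_nhds (by linarith))
    filter_upwards [hcev, hρe] with n hcn hρn w hw
    have hwR : ‖w‖ < R := by simpa using hw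
    have hwn := norm_nonneg w
    have hB := Complex.borelCaratheodory (f := P n) (R := R1) (z := w) hM
      (hP n).differentiableOn (by
        intro v hv
        have hv1 : ‖v‖ < R1 := by simpa using hv
        have hvn := norm_nonneg v
        refine (hin n v (by simp; linarith)).trans ?_
        have h1 : (ρ n + ‖v‖) / (ρ n - ‖v‖) ≤ 2 / (R2 - R1) := by
          have := hρ1 n
          gcongr <;> linarith
        have h2 : (P n 0).re ≤ c0 + 1 := (hPc n).trans hcn.le
        have h3 : 0 < R2 - R1 := by linarith
        exact mul_le_mul h1 h2 (hP0 n) (by positivity)) (by linarith) (by simp; linarith)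
    have hP0n : ‖P n 0‖ ≤ c0 + 1 := by
      have : ‖P n 0‖ = (P n 0).re := by
        have : P n 0 = (((P n 0).re : ℝ) : ℂ) := by
          apply Complex.ext <;> simp [him n]
        rw [this, Complex.norm_real, Real.norm_of_nonneg (hP0 n)]; simp
      rw [this]; exact (hPc n).trans hcn.le
    have hRR : 0 < R1 - R := by linarith
    have hRw : R1 - R ≤ R1 - ‖w‖ := by linarith
    refine hB.trans (add_le_add ?_ ?_)
    · apply div_le_div₀ (by positivity) _ hRR hRw
      nlinarith
    · apply div_le_div₀ (by positivity) _ hRR hRw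
      have : R1 + ‖w‖ ≤ 2 := by linarith
      exact mul_le_mul hP0n this (by linarith) (by linarith))
  have hGa : AnalyticOnNhd ℂ (fun z => Q (G z)) Ω := fun z hz =>
    (hQa _ (cf.mG z hz)).comp ((cf.dG.analyticOnNhd hΩo) z hz)
  have hre : ∀ w ∈ ball (0:ℂ) 1, Tendsto (fun n => (P n w).re) (hyperfilter ℕ) (𝓝 (Q w).re) :=
    fun w hw => (Complex.continuous_re.tendsto _).comp (hQ w hw)
  refine ⟨fun z => (Q (G z)).re, harmonicOn_re hGa, fun z hz => ?_, ?_⟩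
  · refine ge_of_tendsto (hre _ (cf.mG z hz)) ?_
    have hG1 : ‖G z‖ < 1 := by simpa using cf.mG z hz
    have hρe : ∀ᶠ n in (hyperfilter ℕ : Filter ℕ), ‖G z‖ < ρ n :=
      hle (hρ.eventually (lt_mem_nhds hG1))
    filter_upwards [hρe] with n hn
    have := pow_major hp (F := fun w => f (ψ w)) (P := P n) (ρ := ρ n) (w := G z) (by
      intro w hw
      have hw1 : w ∈ ball (0:ℂ) 1 := by
        have : ‖w‖ ≤ ρ n := by simpa using hw
        simpa using this.trans_lt (hρ1 n)
      exact ((hf.analyticOnNhd hΩo) _ (cf.mψ w hw1)).comp ((cf.dψ.analyticOnNhd isOpen_ball) w hw1))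
      (han n _) (hmaj n) (by simpa using hn)
    simpa [cf.ψG z hz] using this
  · have hG1 : ‖G 0‖ < 1 := by simpa using cf.mG 0 h0
    have hρe : ∀ᶠ n in (hyperfilter ℕ : Filter ℕ), ‖G 0‖ < ρ n :=
      hle (hρ.eventually (lt_mem_nhds hG1))
    have ht : Tendsto (fun n => (ρ n + ‖G 0‖) / (ρ n - ‖G 0‖) * c n) (hyperfilter ℕ)
        (𝓝 ((1 + ‖G 0‖) / (1 - ‖G 0‖) * c0)) :=
      ((((hρ.add_const _).div (hρ.sub_const _) (by linarith)).mul hc)).mono_left hle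
    refine le_of_tendsto_of_tendsto (hre _ (cf.mG 0 h0)) ht ?_
    filter_upwards [hρe] with n hn
    refine (hin n _ (by simpa using hn)).trans ?_
    have : 0 ≤ (ρ n + ‖G 0‖) / (ρ n - ‖G 0‖) := by
      have := hρ0 n
      have := norm_nonneg (G 0)
      apply div_nonneg <;> linarith
    exact mul_le_mul_of_nonneg_left (hPc n) this

lemma goal12 {Ω : Set ℂ} {u : ℂ → ℝ} {ν : Measure ℂ} {ψ G : ℂ → ℂ} (cx : Ctx Ω u ν)
    (cf : Conf Ω ψ G) {μfam : ℝ → Measure ℂ}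
    (hμ : ∀ r : ℝ, r < 0 → IsMAMeasure u Ω ν r (μfam r)) {p : ℝ} (hp : 1 ≤ p) :
    ∃ C : ℝ, 0 < C ∧ ∀ f : ℂ → ℂ, MemPS p Ω μfam f → ∃ h, HarmonicOn h Ω ∧
      (∀ z ∈ Ω, ‖f z‖ ^ p ≤ h z) ∧ h 0 ≤ C * (psNormPow p μfam f).toReal := by
  have hu0 := cx.ex.neg 0 cx.z0
  have hν0 : ν univ ≠ 0 := by
    obtain ⟨νr, hνr, _⟩ := hμ (u 0 / 2) (by linarith)
    exact cx.nu_pos (by linarith) (by linarith) hνr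
  obtain ⟨R0, hR0, hR1, hK⟩ := cx.exists_R0 cf hν0
  set M := (ν {z | z ∈ Ω ∧ ‖G z‖ ≤ R0}).toReal with hMd
  have hM : 0 < M := ENNReal.toReal_pos hK ((measure_mono (subset_univ _)).trans_lt cx.fin).ne
  set V := (ν univ).toReal with hV
  have hG1 : ‖G 0‖ < 1 := by simpa using cf.mG 0 cx.z0
  have hG0 := norm_nonneg (G 0)
  refine ⟨(1 + ‖G 0‖) / (1 - ‖G 0‖) * (2 ^ (p-1) / M * (4 / (1 - R0))), ?_, ?_⟩
  · have : 0 < 1 - R0 := by linarith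
    have : 0 < 1 - ‖G 0‖ := by linarith
    positivity
  rintro f ⟨hf, hfin⟩
  set N := (psNormPow p μfam f).toReal with hN
  have hN0 : 0 ≤ N := ENNReal.toReal_nonneg
  set δ : ℕ → ℝ := fun n => 1 / ((n:ℝ) + 1) with hδd
  have hδ : ∀ n, 0 < δ n := fun n => by simp only [hδd]; positivity
  have hδ1 : ∀ n, δ n ≤ 1 := fun n => by
    simp only [hδd]; rw [div_le_one (by positivity)]; linarith [(Nat.cast_nonneg n : (0:ℝ) ≤ n)]
  have hδt : Tendsto δ atTop (𝓝 0) := tendsto_one_div_add_atTop_nhds_zero_nat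
  set ρ : ℕ → ℝ := fun n => 1 - (1 - R0) / 2 * δ n with hρd
  have hρ1 : ∀ n, ρ n < 1 := fun n => by
    have : 0 < (1 - R0) / 2 * δ n := mul_pos (by linarith) (hδ n)
    simp only [hρd]; linarith
  have hρ2 : ∀ n, (1 + R0) / 2 ≤ ρ n := fun n => by
    have := hδ1 n
    simp only [hρd]; nlinarith
  have hev : ∀ n, ∀ᶠ r in 𝓝[<] (0:ℝ), ∫⁻ z, ENNReal.ofReal (‖f z‖ ^ p) ∂(μfam r) ≤
      ENNReal.ofReal (N + δ n) := fun n => by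
    have hlt : psNormPow p μfam f < ENNReal.ofReal (N + δ n) := by
      rw [ENNReal.lt_ofReal_iff_toReal_lt hfin.ne]; linarith [hδ n]
    exact (eventually_lt_of_limsup_lt hlt).mono fun r h => h.le
  choose P hPd hPi hPm hPb using fun n => step cx cf hμ hp hR0 hR1 hf hN0 (hδ n) (hρ2 n) (hρ1 n) (hev n)
  have hρt : Tendsto ρ atTop (𝓝 1) := by
    have := (hδt.const_mul ((1 - R0)/2)).const_sub 1
    simpa using this
  obtain ⟨h, h1, h2, h3⟩ := limit_major cx.op cx.z0 cf hp hf hPd hPi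
    (fun n => by linarith [hρ2 n]) hρ1 hρt hPm
    (c := fun n => (2 ^ (p-1) * (N + δ n + δ n * V) / M + 5 * δ n) * (4 / (1 - R0)))
    (c0 := (2 ^ (p-1) * (N + 0 + 0 * V) / M + 5 * 0) * (4 / (1 - R0)))
    (((((((hδt.const_add N).add (hδt.mul_const V)).const_mul _).div_const M).add
      (hδt.const_mul 5))).mul_const _) (by
    intro n
    have hb := hPb n
    have hb2 : (1 - R0) / 4 * (P n 0).re - 5 * δ n ≤ 2 ^ (p-1) * (N + δ n + δ n * V) / M := by
      rw [le_div_iff₀ hM, mul_comm]; exact hb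
    have hb3 : (1 - R0) / 4 * (P n 0).re ≤ 2 ^ (p-1) * (N + δ n + δ n * V) / M + 5 * δ n := by
      linarith
    have hR : 0 < 1 - R0 := by linarith
    calc (P n 0).re = (1 - R0) / 4 * (P n 0).re * (4 / (1 - R0)) := by field_simp
      _ ≤ _ := by gcongr)
  refine ⟨h, h1, h2, h3.trans (le_of_eq ?_)⟩
  ring

lemma rpow_conv {p a C : ℝ} {N : ℝ≥0∞} (hp : 1 ≤ p) (ha : 0 ≤ a) (hC : 0 < C) (hN : N < ⊤)
    (h : a ≤ C * N.toReal) :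
    ENNReal.ofReal (a ^ (1/p)) ≤ ENNReal.ofReal (C ^ (1/p)) * N ^ (1/p) := by
  have hp' : 0 ≤ 1 / p := by positivity
  rw [← ENNReal.ofReal_rpow_of_nonneg ha hp', ← ENNReal.ofReal_rpow_of_nonneg hC.le hp',
    ← ENNReal.mul_rpow_of_nonneg _ _ hp']
  refine ENNReal.rpow_le_rpow ?_ hp'
  calc ENNReal.ofReal a ≤ ENNReal.ofReal (C * N.toReal) := ENNReal.ofReal_le_ofReal h
    _ = _ := by rw [ENNReal.ofReal_mul hC.le, ENNReal.ofReal_toReal hN.ne]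

lemma aesm_of_contOn {Ω : Set ℂ} (hΩ : IsOpen Ω) {g : ℂ → ℂ} (hg : ContinuousOn g Ω)
    {μ : Measure ℂ} (hμ : ∀ᵐ z ∂μ, z ∈ Ω) : AEStronglyMeasurable g μ := by
  have := hg.aestronglyMeasurable (μ := μ) hΩ.measurableSet
  rwa [Measure.restrict_eq_self_of_ae_mem hμ] at this

lemma lint_eq {p : ℝ} (hp : 1 ≤ p) (g : ℂ → ℂ) (μ : Measure ℂ) :
    ∫⁻ z, ENNReal.ofReal (‖g z‖ ^ p) ∂μ = eLpNorm g (ENNReal.ofReal p) μ ^ p := by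
  have hp0 : 0 < p := by linarith
  rw [eLpNorm_eq_lintegral_rpow_enorm_toReal (by simpa using hp0) ENNReal.ofReal_ne_top,
    ENNReal.toReal_ofReal hp0.le, ← ENNReal.rpow_mul, one_div, inv_mul_cancel₀ hp0.ne',
    ENNReal.rpow_one]
  refine lintegral_congr fun z => ?_
  rw [← ofReal_norm, ENNReal.ofReal_rpow_of_nonneg (norm_nonneg _) hp0.le]

lemma ub {Ω : Set ℂ} (hΩ : IsOpen Ω) {p : ℝ} (hp : 1 ≤ p) {lam : ℕ → Measure ℂ} {K : ℕ → Set ℂ}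
    (hlf : ∀ n, IsFiniteMeasure (lam n))
    (hKΩ : ∀ n, K n ⊆ Ω) (hlK : ∀ n, ∀ᵐ z ∂(lam n), z ∈ K n) {b : ℕ → ℂ → ℂ}
    (hb : ∀ n, ∃ B : ℝ, ∀ k, ∀ z ∈ K n, ‖b k z‖ ≤ B)
    (hT : ∀ a : ℕ → ℂ, Summable (fun k => ‖a k‖) → ContinuousOn (fun z => ∑' k, a k * b k z) Ω)
    (hbd : ∀ a : ℕ → ℂ, Summable (fun k => ‖a k‖) → ∃ C : ℝ≥0∞, C < ⊤ ∧ ∀ n,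
      ∫⁻ z, ENNReal.ofReal (‖∑' k, a k * b k z‖ ^ p) ∂(lam n) ≤ C) :
    ∃ C : ℝ≥0∞, C < ⊤ ∧ ∀ n k, ∫⁻ z, ENNReal.ofReal (‖b k z‖ ^ p) ∂(lam n) ≤ C := by
  have hp0 : 0 < p := by linarith
  let E := lp (fun _ : ℕ => ℂ) 1
  have hsum : ∀ a : E, Summable (fun k => ‖a k‖) := fun a => by
    simpa using (lp.memℓp a).summable (by simp)
  have hnorm : ∀ a : E, ‖a‖ = ∑' k, ‖a k‖ := fun a => by
    simpa using lp.norm_eq_tsum_rpow (by simp) a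
  set T : E → ℂ → ℂ := fun a z => ∑' k, a k * b k z with hTd
  have hlΩ : ∀ n, ∀ᵐ z ∂(lam n), z ∈ Ω := fun n => (hlK n).mono fun z hz => hKΩ n hz
  have hTm : ∀ n a, AEStronglyMeasurable (T a) (lam n) := fun n a =>
    aesm_of_contOn hΩ (hT a (hsum a)) (hlΩ n)
  choose B hB using hb
  have hs2 : ∀ n (a : E), ∀ z ∈ K n, Summable (fun k => ‖a k * b k z‖) := fun n a z hz => by
    refine Summable.of_nonneg_of_le (fun _ => norm_nonneg _) (fun k => ?_) ((hsum a).mul_right (B n))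
    rw [norm_mul]
    exact mul_le_mul_of_nonneg_left (hB n k z hz) (norm_nonneg _)
  have hTb : ∀ n (a : E), ∀ z ∈ K n, ‖T a z‖ ≤ ‖a‖ * B n := fun n a z hz => by
    refine (norm_tsum_le_tsum_norm (hs2 n a z hz)).trans ?_
    rw [hnorm, ← tsum_mul_right]
    refine (hs2 n a z hz).tsum_le_tsum (fun k => ?_) ((hsum a).mul_right (B n))
    rw [norm_mul]
    exact mul_le_mul_of_nonneg_left (hB n k z hz) (norm_nonneg _)
  set P := ENNReal.ofReal p with hP
  have hP1 : 1 ≤ P := by simpa [hP] using hp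
  have hle : ∀ n a, eLpNorm (T a) P (lam n) ≤
      (lam n) univ ^ P.toReal⁻¹ * ENNReal.ofReal (‖a‖ * B n) := fun n a =>
    eLpNorm_le_of_ae_bound ((hlK n).mono fun z hz => hTb n a z hz)
  have hm : ∀ n, (lam n) univ ^ P.toReal⁻¹ ≠ ⊤ := fun n =>
    ENNReal.rpow_ne_top_of_nonneg (by positivity) (measure_ne_top _ _)
  have hfin : ∀ n a, eLpNorm (T a) P (lam n) ≠ ⊤ := fun n a =>
    ((hle n a).trans_lt (ENNReal.mul_lt_top (hm n).lt_top ENNReal.ofReal_lt_top)).ne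
  let q : ℕ → Seminorm ℂ E := fun n => Seminorm.of (fun a => (eLpNorm (T a) P (lam n)).toReal)
    (by
      intro a a'
      rw [← ENNReal.toReal_add (hfin n a) (hfin n a')]
      refine ENNReal.toReal_mono (ENNReal.add_ne_top.2 ⟨hfin n a, hfin n a'⟩) ?_
      refine le_trans (le_of_eq ?_) (eLpNorm_add_le (hTm n a) (hTm n a') hP1)
      refine eLpNorm_congr_ae ((hlK n).mono fun z hz => ?_)
      have h1 := (hs2 n a z hz).of_norm.tsum_add (hs2 n a' z hz).of_norm
      simp only [← add_mul] at h1
      exact h1)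
    (by
      intro c a
      have : T (c • a) = c • T a := by
        ext z
        have h1 : ∑' k, c * (a k * b k z) = c * ∑' k, a k * b k z := tsum_mul_left
        simp only [← mul_assoc] at h1
        exact h1
      rw [this, eLpNorm_const_smul, ENNReal.toReal_mul]; simp)
  have hqa : ∀ n a, q n a = (eLpNorm (T a) P (lam n)).toReal := fun n a => rfl
  have hqc : ∀ n, Continuous (q n) := by
    intro n
    set c : NNReal := ((lam n) univ ^ P.toReal⁻¹).toNNReal * (B n).toNNReal with hc
    refine Seminorm.continuous_of_le (q := c • normSeminorm ℂ E) ?_ ?_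
    · have : (⇑(c • normSeminorm ℂ E) : E → ℝ) = fun x => (c:ℝ) * ‖x‖ := by
        ext x; simp [NNReal.smul_def]
      rw [this]; exact continuous_const.mul continuous_norm
    · intro a
      have h1 : q n a ≤ ((lam n) univ ^ P.toReal⁻¹ * ENNReal.ofReal (‖a‖ * B n)).toReal :=
        ENNReal.toReal_mono (ENNReal.mul_ne_top (hm n) ENNReal.ofReal_ne_top) (hle n a)
      refine h1.trans ?_
      have : (c • normSeminorm ℂ E) a = (c:ℝ) * ‖a‖ := by simp [NNReal.smul_def]
      rw [this, ENNReal.toReal_mul, hc, ENNReal.ofReal_mul (norm_nonneg _), ENNReal.toReal_mul,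
        ENNReal.toReal_ofReal (norm_nonneg _)]
      apply le_of_eq
      push_cast
      simp only [ENNReal.coe_toNNReal_eq_toReal, ENNReal.toReal_ofReal']
      rw [Real.coe_toNNReal']; ring
  have hbdd : BddAbove (range q) := by
    rw [Seminorm.bddAbove_range_iff]
    intro a
    obtain ⟨C, hC, hCn⟩ := hbd a (hsum a)
    refine ⟨(C ^ (1/p)).toReal, ?_⟩
    rintro _ ⟨n, rfl⟩
    simp only [hqa]
    refine ENNReal.toReal_mono (ENNReal.rpow_ne_top_of_nonneg (by positivity) hC.ne) ?_
    have := hCn n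
    rw [show (fun z => ENNReal.ofReal (‖∑' k, a k * b k z‖ ^ p)) =
      fun z => ENNReal.ofReal (‖T a z‖ ^ p) from rfl, lint_eq hp] at this
    rw [← ENNReal.rpow_le_rpow_iff hp0, ← ENNReal.rpow_mul, one_div, inv_mul_cancel₀ hp0.ne',
      ENNReal.rpow_one]
    exact this
  have hcont := Seminorm.continuous_iSup q hqc hbdd
  obtain ⟨C, hC0, hC⟩ := Seminorm.bound_of_continuous_normedSpace (⨆ n, q n) (by
    rw [Seminorm.coe_iSup_eq hbdd]; exact hcont)
  refine ⟨ENNReal.ofReal C ^ p, ENNReal.rpow_lt_top_of_nonneg hp0.le ENNReal.ofReal_ne_top, ?_⟩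
  intro n k
  rw [lint_eq hp]
  refine ENNReal.rpow_le_rpow ?_ hp0.le
  have h1 := hC (lp.single 1 k (1:ℂ))
  rw [lp.norm_single (by simp)] at h1
  have h2 : q n (lp.single 1 k (1:ℂ)) ≤ C := by
    refine le_trans ?_ (h1.trans (by simp))
    rw [Seminorm.iSup_apply hbdd]
    exact le_ciSup ((Seminorm.bddAbove_range_iff.1 hbdd) _) n
  have h3 : T (lp.single 1 k (1:ℂ)) = b k := by
    ext z
    simp only [hTd]
    rw [tsum_eq_single k]
    · simp
    · intro j hj; simp [Pi.single_apply, hj]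
  rw [hqa, h3] at h2
  rw [← h3] at h2 ⊢
  exact (ENNReal.le_ofReal_iff_toReal_le (hfin n _) hC0.le).2 h2

section disc
variable {F : ℂ → ℂ} {ρ : ℕ → ℝ} {a : ℕ → ℂ}

lemma disc_bdd (hF : DifferentiableOn ℂ F (ball 0 1)) {R : ℝ} (hR : R < 1) :
    ∃ B : ℝ, 0 ≤ B ∧ ∀ w, ‖w‖ ≤ R → ‖F w‖ ≤ B := by
  obtain ⟨B, hB⟩ := (isCompact_closedBall (0:ℂ) R).exists_bound_of_continuousOn
    (hF.continuousOn.mono (closedBall_subset_ball hR))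
  exact ⟨max B 0, le_max_right _ _, fun w hw => (hB w (by simpa using hw)).trans (le_max_left _ _)⟩

lemma scale_norm (h0 : ∀ k, 0 ≤ ρ k) (h1 : ∀ k, ρ k < 1) (k : ℕ) (w : ℂ) :
    ‖(ρ k : ℂ) * w‖ ≤ ‖w‖ := by
  rw [norm_mul, Complex.norm_real, Real.norm_of_nonneg (h0 k)]
  exact mul_le_of_le_one_left (norm_nonneg _) (h1 k).le

lemma disc_bdd' (hF : DifferentiableOn ℂ F (ball 0 1)) (h0 : ∀ k, 0 ≤ ρ k) (h1 : ∀ k, ρ k < 1)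
    {R : ℝ} (hR : R < 1) :
    ∃ B : ℝ, 0 ≤ B ∧ ∀ k w, ‖w‖ ≤ R → ‖F (ρ k * w)‖ ≤ B := by
  obtain ⟨B, hB0, hB⟩ := disc_bdd hF hR
  exact ⟨B, hB0, fun k w hw => hB _ ((scale_norm h0 h1 k w).trans hw)⟩

lemma disc_summable (hF : DifferentiableOn ℂ F (ball 0 1)) (h0 : ∀ k, 0 ≤ ρ k) (h1 : ∀ k, ρ k < 1)
    (ha : Summable fun k => ‖a k‖) {w : ℂ} (hw : ‖w‖ < 1) :
    Summable fun k => ‖a k * F (ρ k * w)‖ := by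
  obtain ⟨B, hB0, hB⟩ := disc_bdd' hF h0 h1 hw
  refine Summable.of_nonneg_of_le (fun _ => norm_nonneg _) (fun k => ?_) (ha.mul_right B)
  rw [norm_mul]
  exact mul_le_mul_of_nonneg_left (hB k w le_rfl) (norm_nonneg _)

lemma disc_diff (hF : DifferentiableOn ℂ F (ball 0 1)) (h0 : ∀ k, 0 ≤ ρ k) (h1 : ∀ k, ρ k < 1)
    (ha : Summable fun k => ‖a k‖) :
    DifferentiableOn ℂ (fun w => ∑' k, a k * F (ρ k * w)) (ball 0 1) := by
  intro x hx
  have hx1 : ‖x‖ < 1 := by simpa using hx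
  set R := (1 + ‖x‖)/2 with hRd
  have hR : R < 1 := by linarith
  obtain ⟨B, hB0, hB⟩ := disc_bdd' hF h0 h1 hR
  have : DifferentiableOn ℂ (fun w => ∑' k, a k * F (ρ k * w)) (ball 0 R) := by
    refine Complex.differentiableOn_tsum_of_summable_norm (ha.mul_right B) (fun k => ?_) isOpen_ball
      fun k w hw => ?_
    · refine DifferentiableOn.const_mul ?_ _
      refine hF.comp (by fun_prop) fun w hw => ?_
      have hw : ‖w‖ < R := by simpa using hw
      simpa using (scale_norm h0 h1 k w).trans_lt (hw.trans hR)
    · have hw : ‖w‖ < R := by simpa using hw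
      rw [norm_mul]
      exact mul_le_mul_of_nonneg_left (hB k w hw.le) (norm_nonneg _)
  exact (this.differentiableAt (isOpen_ball.mem_nhds (by simp; linarith))).differentiableWithinAt

lemma jensen_tsum {p : ℝ} (hp : 1 ≤ p) {α x : ℕ → ℝ} (hα : ∀ k, 0 ≤ α k) (hx : ∀ k, 0 ≤ x k)
    (hs : Summable α) {y : ℕ → ℝ} (hy : ∀ k, x k ^ p ≤ y k)
    (hsy : Summable fun k => α k * y k) :
    (∑' k, α k * x k) ^ p ≤ (∑' k, α k) ^ (p - 1) * ∑' k, α k * y k := by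
  have hp0 : 0 < p := by linarith
  have hy0 : ∀ k, 0 ≤ y k := fun k => (by have := hx k; positivity : (0:ℝ) ≤ x k ^ p).trans (hy k)
  have hA : 0 ≤ ∑' k, α k := tsum_nonneg hα
  have hD : 0 ≤ ∑' k, α k * y k := tsum_nonneg fun k => mul_nonneg (hα k) (hy0 k)
  have hpi : 0 ≤ 1 - p⁻¹ := by
    have : p⁻¹ ≤ 1 := inv_le_one_of_one_le₀ hp
    linarith
  have key : ∑' k, α k * x k ≤ (∑' k, α k) ^ (1 - p⁻¹) * (∑' k, α k * y k) ^ p⁻¹ := by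
    refine Real.tsum_le_of_sum_le (fun k => mul_nonneg (hα k) (hx k)) fun s => ?_
    refine (Real.inner_le_weight_mul_Lp_of_nonneg s hp α x hα hx).trans ?_
    have e1 : ∑ i ∈ s, α i ≤ ∑' k, α k := hs.sum_le_tsum s fun k _ => hα k
    have e2 : ∑ i ∈ s, α i * x i ^ p ≤ ∑' k, α k * y k :=
      (Finset.sum_le_sum fun k _ => mul_le_mul_of_nonneg_left (hy k) (hα k)).trans
        (hsy.sum_le_tsum s fun k _ => mul_nonneg (hα k) (hy0 k))
    have e3 : 0 ≤ ∑ i ∈ s, α i := Finset.sum_nonneg fun k _ => hα k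
    have e4 : 0 ≤ ∑ i ∈ s, α i * x i ^ p := Finset.sum_nonneg fun k _ =>
      mul_nonneg (hα k) (Real.rpow_nonneg (hx k) _)
    exact mul_le_mul (Real.rpow_le_rpow e3 e1 hpi) (Real.rpow_le_rpow e4 e2 (by positivity))
      (by positivity) (by positivity)
  calc (∑' k, α k * x k) ^ p
      ≤ ((∑' k, α k) ^ (1 - p⁻¹) * (∑' k, α k * y k) ^ p⁻¹) ^ p :=
        Real.rpow_le_rpow (tsum_nonneg fun k => mul_nonneg (hα k) (hx k)) key hp0.le
    _ = _ := by
        rw [Real.mul_rpow (by positivity) (by positivity), ← Real.rpow_mul hA, ← Real.rpow_mul hD,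
          inv_mul_cancel₀ hp0.ne', Real.rpow_one]
        congr 2
        field_simp

lemma disc_major {p : ℝ} (hp : 1 ≤ p) (hF : DifferentiableOn ℂ F (ball 0 1)) {Gh : ℂ → ℂ}
    (hGh : DifferentiableOn ℂ Gh (ball 0 1))
    (hm : ∀ w ∈ ball (0:ℂ) 1, ‖F w‖ ^ p ≤ (Gh w).re)
    (h0 : ∀ k, 0 ≤ ρ k) (h1 : ∀ k, ρ k < 1)
    (ha : Summable fun k => ‖a k‖) {w : ℂ} (hw : ‖w‖ < 1) :
    ‖∑' k, a k * F (ρ k * w)‖ ^ p ≤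
      ((((∑' k, ‖a k‖) ^ (p - 1) : ℝ) : ℂ) * ∑' k, ((‖a k‖ : ℝ) : ℂ) * Gh (ρ k * w)).re := by
  have ha' : Summable fun k => ‖((‖a k‖ : ℝ) : ℂ)‖ := by simpa using ha
  have hsG := disc_summable hGh h0 h1 ha' hw
  have hsF := disc_summable hF h0 h1 ha hw
  rw [Complex.re_ofReal_mul, Complex.re_tsum hsG.of_norm]
  simp only [Complex.re_ofReal_mul]
  have hsre : Summable fun k => ‖a k‖ * (Gh (ρ k * w)).re := by
    have := Complex.reCLM.summable hsG.of_norm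
    simpa using this
  refine le_trans ?_ (jensen_tsum hp (fun k => norm_nonneg (a k))
    (fun k => norm_nonneg (F (ρ k * w))) ha (fun k => hm _ ?_) hsre)
  · refine Real.rpow_le_rpow (norm_nonneg _) ?_ (by linarith)
    refine (norm_tsum_le_tsum_norm hsF).trans (le_of_eq ?_)
    simp only [norm_mul]
  · simpa using (scale_norm h0 h1 k w).trans_lt hw

end disc

lemma bounded_ps {Ω : Set ℂ} {u : ℂ → ℝ} {ν : Measure ℂ} (cx : Ctx Ω u ν)
    {μfam : ℝ → Measure ℂ} (hμ : ∀ r : ℝ, r < 0 → IsMAMeasure u Ω ν r (μfam r))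
    {p : ℝ} (hp : 1 ≤ p) {g : ℂ → ℂ} {c : ℝ} (hg : ∀ z ∈ Ω, ‖g z‖ ≤ c) :
    psNormPow p μfam g < ⊤ := by
  have hu0 := cx.ex.neg 0 cx.z0
  have e2 : ∀ᶠ r in 𝓝[<] (0:ℝ), r < 0 := self_mem_nhdsWithin
  have e4 : ∀ᶠ r in 𝓝[<] (0:ℝ), u 0 < r := nhdsWithin_le_nhds (lt_mem_nhds hu0)
  have : psNormPow p μfam g ≤ ENNReal.ofReal (c ^ p) * ν univ := by
    refine limsup_le_of_le (by isBoundedDefault) ?_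
    filter_upwards [e2, e4] with r h2 h4
    calc ∫⁻ z, ENNReal.ofReal (‖g z‖ ^ p) ∂(μfam r)
        ≤ ∫⁻ _, ENNReal.ofReal (c ^ p) ∂(μfam r) := by
          refine lintegral_mono_ae ?_
          filter_upwards [compl_mem_ae_iff.2 (mu_compl (hμ r h2))] with z hz
          have hzΩ : z ∈ Ω := by simpa using hz
          exact ENNReal.ofReal_le_ofReal
            (Real.rpow_le_rpow (norm_nonneg _) (hg z hzΩ) (by linarith))
      _ = ENNReal.ofReal (c ^ p) * μfam r univ := lintegral_const _
      _ ≤ _ := mul_le_mul' le_rfl (cx.mu_mass h2 h4 (hμ r h2))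
  exact this.trans_lt (ENNReal.mul_lt_top ENNReal.ofReal_lt_top cx.fin)

lemma exists_bad {Ω : Set ℂ} {u : ℂ → ℝ} {ν : Measure ℂ} {ψ G : ℂ → ℂ} (cx : Ctx Ω u ν)
    (cf : Conf Ω ψ G) {μfam : ℝ → Measure ℂ}
    (hμ : ∀ r : ℝ, r < 0 → IsMAMeasure u Ω ν r (μfam r)) {p : ℝ} (hp : 1 ≤ p)
    {f : ℂ → ℂ} (hf : DifferentiableOn ℂ f Ω) (hbad : psNormPow p μfam f = ⊤)
    {ρ : ℕ → ℝ} (h0 : ∀ k, 0 ≤ ρ k) (h1 : ∀ k, ρ k < 1) (hρ : Tendsto ρ atTop (𝓝 1)) :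
    ∃ a : ℕ → ℂ, Summable (fun k => ‖a k‖) ∧
      psNormPow p μfam (fun z => ∑' k, a k * f (ψ (ρ k * G z))) = ⊤ := by
  by_contra hcon
  push Not at hcon
  have hu0 := cx.ex.neg 0 cx.z0
  have hp0 : 0 < p := by linarith
  have hF : DifferentiableOn ℂ (fun w => f (ψ w)) (ball 0 1) := hf.comp cf.dψ cf.mψ
  have hGn : ∀ z ∈ Ω, ‖G z‖ < 1 := fun z hz => by simpa using cf.mG z hz
  -- choose r n
  have hr : ∀ n : ℕ, ∃ r : ℝ, r < 0 ∧ u 0 < r ∧ -(1 / ((n:ℝ) + 1)) < r ∧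
      (n : ℝ≥0∞) < ∫⁻ z, ENNReal.ofReal (‖f z‖ ^ p) ∂(μfam r) := by
    intro n
    have e2 : ∀ᶠ r in 𝓝[<] (0:ℝ), r < 0 := self_mem_nhdsWithin
    have e4 : ∀ᶠ r in 𝓝[<] (0:ℝ), u 0 < r := nhdsWithin_le_nhds (lt_mem_nhds hu0)
    have e5 : ∀ᶠ r in 𝓝[<] (0:ℝ), -(1 / ((n:ℝ) + 1)) < r :=
      nhdsWithin_le_nhds (lt_mem_nhds (by have : 0 < 1 / ((n:ℝ) + 1) := by positivity
                                          linarith))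
    have hfr : ∃ᶠ r in 𝓝[<] (0:ℝ), (n : ℝ≥0∞) < ∫⁻ z, ENNReal.ofReal (‖f z‖ ^ p) ∂(μfam r) := by
      refine frequently_lt_of_lt_limsup (by isBoundedDefault) ?_
      change _ < psNormPow p μfam f
      rw [hbad]; exact ENNReal.natCast_lt_top n
    obtain ⟨r, hr1, hr2, hr3, hr4⟩ := (hfr.and_eventually (e2.and (e4.and e5))).exists
    exact ⟨r, hr2, hr3, hr4, hr1⟩
  choose r hrneg hr0 hrn hrint using hr
  set L : ℕ → Set ℂ := fun n => {z | z ∈ Ω ∧ u z < -(1 / ((n:ℝ) + 1))} with hL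
  have hΩae : ∀ n, ∀ᵐ z ∂(μfam (r n)), z ∈ Ω := fun n => by
    filter_upwards [compl_mem_ae_iff.2 (mu_compl (hμ (r n) (hrneg n)))] with z hz
    simpa using hz
  have hm : ∀ n : ℕ, ∃ m, (n : ℝ≥0∞) < ∫⁻ z in L m, ENNReal.ofReal (‖f z‖ ^ p) ∂(μfam (r n)) := by
    intro n
    have h := hrint n
    rw [← Measure.restrict_eq_self_of_ae_mem (hΩae n), cx.union,
      setLIntegral_iUnion_of_directed _ (Monotone.directed_le (Ctx.mono_sub)), lt_iSup_iff] at h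
    exact h
  choose m hmint using hm
  set lam : ℕ → Measure ℂ := fun n => (μfam (r n)).restrict (L (m n)) with hlam
  have hLopen : ∀ n, IsOpen (L n) := fun n => cx.sub_open _
  have hLΩ : ∀ n, L n ⊆ Ω := fun n z hz => hz.1
  have hneg : ∀ n : ℕ, -(1 / ((n:ℝ) + 1)) < 0 := fun n => by
    have : 0 < 1 / ((n:ℝ) + 1) := by positivity
    linarith
  have hμf : ∀ n, IsFiniteMeasure (μfam (r n)) := fun n =>
    ⟨(cx.mu_mass (hrneg n) (hr0 n) (hμ _ (hrneg n))).trans_lt cx.fin⟩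
  have hlf : ∀ n, IsFiniteMeasure (lam n) := fun n => by
    have := hμf n
    simp only [hlam]; infer_instance
  have hlK : ∀ n, ∀ᵐ z ∂(lam n), z ∈ L (m n) := fun n =>
    ae_restrict_mem (hLopen _).measurableSet
  have hb : ∀ n, ∃ B : ℝ, ∀ k, ∀ z ∈ L (m n), ‖f (ψ (ρ k * G z))‖ ≤ B := by
    intro n
    obtain ⟨hc, hs⟩ := cx.ex.exh _ (hneg (m n))
    obtain ⟨R, hR1, hR⟩ : ∃ R < 1, ∀ z ∈ L (m n), ‖G z‖ ≤ R := by
      rcases (closure (L (m n))).eq_empty_or_nonempty with he | hne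
      · exact ⟨0, by norm_num, fun z hz => absurd (subset_closure hz) (by rw [he]; simp)⟩
      · obtain ⟨z0, hz0, hmax⟩ := hc.exists_isMaxOn hne
          ((cf.dG.continuousOn.mono hs).norm)
        exact ⟨‖G z0‖, hGn z0 (hs hz0), fun z hz => hmax (subset_closure hz)⟩
    obtain ⟨B, _, hB⟩ := disc_bdd' hF h0 h1 hR1
    exact ⟨B, fun k z hz => hB k _ (hR z hz)⟩
  have hTd : ∀ a : ℕ → ℂ, Summable (fun k => ‖a k‖) →
      DifferentiableOn ℂ (fun z => ∑' k, a k * f (ψ (ρ k * G z))) Ω := fun a ha =>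
    (disc_diff hF h0 h1 ha).comp cf.dG cf.mG
  have hrt : Tendsto r atTop (𝓝[<] 0) := by
    refine tendsto_nhdsWithin_iff.2 ⟨?_, .of_forall hrneg⟩
    have : Tendsto (fun n : ℕ => -(1 / ((n:ℝ) + 1))) atTop (𝓝 0) := by
      simpa using (tendsto_one_div_add_atTop_nhds_zero_nat (𝕜 := ℝ)).neg
    exact tendsto_of_tendsto_of_tendsto_of_le_of_le this tendsto_const_nhds
      (fun n => (hrn n).le) fun n => (hrneg n).le
  have hbd : ∀ a : ℕ → ℂ, Summable (fun k => ‖a k‖) → ∃ C : ℝ≥0∞, C < ⊤ ∧ ∀ n,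
      ∫⁻ z, ENNReal.ofReal (‖∑' k, a k * f (ψ (ρ k * G z))‖ ^ p) ∂(lam n) ≤ C := by
    intro a ha
    obtain ⟨C, hC1, hC2⟩ := exists_between (lt_top_iff_ne_top.2 (hcon a ha))
    have hev : ∀ᶠ n in atTop,
        ∫⁻ z, ENNReal.ofReal (‖∑' k, a k * f (ψ (ρ k * G z))‖ ^ p) ∂(lam n) ≤ C := by
      filter_upwards [hrt.eventually (eventually_lt_of_limsup_lt hC1)] with n hn
      exact (lintegral_mono' Measure.restrict_le_self le_rfl).trans hn.le
    obtain ⟨n0, hn0⟩ := eventually_atTop.1 hev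
    have hfin : ∀ n, ∫⁻ z, ENNReal.ofReal (‖∑' k, a k * f (ψ (ρ k * G z))‖ ^ p) ∂(lam n) < ⊤ := by
      intro n
      have := hlf n
      obtain ⟨B, hB⟩ := hb n
      set c := (∑' k, ‖a k‖) * B with hc
      refine (lintegral_mono_ae (g := fun _ => ENNReal.ofReal (c ^ p)) ?_).trans_lt (by
        rw [lintegral_const]; exact ENNReal.mul_lt_top ENNReal.ofReal_lt_top (measure_lt_top _ _))
      filter_upwards [hlK n] with z hz
      refine ENNReal.ofReal_le_ofReal (Real.rpow_le_rpow (norm_nonneg _) ?_ hp0.le)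
      have hs := disc_summable hF h0 h1 ha (hGn z (hLΩ _ hz))
      refine (norm_tsum_le_tsum_norm hs).trans ?_
      rw [hc, ← tsum_mul_right]
      refine hs.tsum_le_tsum (fun k => ?_) (ha.mul_right B)
      rw [norm_mul]
      exact mul_le_mul_of_nonneg_left (hB k z hz) (norm_nonneg _)
    refine ⟨C + ∑ n ∈ Finset.range n0,
      ∫⁻ z, ENNReal.ofReal (‖∑' k, a k * f (ψ (ρ k * G z))‖ ^ p) ∂(lam n), ?_, fun n => ?_⟩
    · exact ENNReal.add_lt_top.2 ⟨hC2, ENNReal.sum_lt_top.2 fun n _ => hfin n⟩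
    · rcases le_or_gt n0 n with h | h
      · exact (hn0 n h).trans le_self_add
      · exact (Finset.single_le_sum (f := fun n => ∫⁻ z, ENNReal.ofReal
          (‖∑' k, a k * f (ψ (ρ k * G z))‖ ^ p) ∂(lam n)) (fun _ _ => bot_le)
          (Finset.mem_range.2 h)).trans le_add_self
  obtain ⟨C, hC, hCb⟩ := ub cx.op hp hlf (fun n => hLΩ (m n)) hlK
    (b := fun k z => f (ψ (ρ k * G z))) hb (fun a ha => (hTd a ha).continuousOn) hbd
  obtain ⟨n, hn⟩ := ENNReal.exists_nat_gt hC.ne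
  refine absurd (hmint n) (not_lt.2 (le_trans ?_ hn.le))
  change ∫⁻ z, _ ∂(lam n) ≤ C
  have hlΩ : ∀ᵐ z ∂(lam n), z ∈ Ω := (hlK n).mono fun z hz => hLΩ _ hz
  have hbc : ∀ k, ContinuousOn (fun z => f (ψ (ρ k * G z))) Ω := fun k =>
    (hF.continuousOn.comp (continuousOn_const.mul cf.dG.continuousOn) fun z hz => by
      simpa using (scale_norm h0 h1 k (G z)).trans_lt (hGn z hz))
  calc ∫⁻ z, ENNReal.ofReal (‖f z‖ ^ p) ∂(lam n)
      = ∫⁻ z, liminf (fun k => ENNReal.ofReal (‖f (ψ (ρ k * G z))‖ ^ p)) atTop ∂(lam n) := by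
        refine lintegral_congr_ae (hlΩ.mono fun z hz => ?_)
        refine (Tendsto.liminf_eq ?_).symm
        refine (ENNReal.continuous_ofReal.tendsto _).comp ?_
        refine Tendsto.rpow_const ?_ (Or.inr hp0.le)
        refine Tendsto.norm ?_
        have h2 : Tendsto (fun k => (ρ k : ℂ) * G z) atTop (𝓝 (G z)) := by
          have := ((Complex.continuous_ofReal.tendsto 1).comp hρ).mul_const (G z)
          simpa using this
        have h3 := (hF.continuousOn.continuousAt (isOpen_ball.mem_nhds (cf.mG z hz))).tendsto.comp h2
        simpa [cf.ψG z hz, Function.comp_def] using h3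
    _ ≤ liminf (fun k => ∫⁻ z, ENNReal.ofReal (‖f (ψ (ρ k * G z))‖ ^ p) ∂(lam n)) atTop := by
        refine lintegral_liminf_le' fun k => ?_
        exact ((aesm_of_contOn cx.op (hbc k) hlΩ).norm.aemeasurable.pow_const p).ennreal_ofReal
    _ ≤ C := by
        refine (liminf_le_limsup).trans (limsup_le_of_le (by isBoundedDefault)
          (.of_forall fun k => hCb n k))

lemma goal3 {Ω : Set ℂ} {u : ℂ → ℝ} {ν : Measure ℂ} {ψ G : ℂ → ℂ} (cx : Ctx Ω u ν)
    (cf : Conf Ω ψ G) {μfam : ℝ → Measure ℂ}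
    (hμ : ∀ r : ℝ, r < 0 → IsMAMeasure u Ω ν r (μfam r)) {p : ℝ} (hp : 1 ≤ p)
    (hex : ∃ f : ℂ → ℂ, MemHClassical p Ω f ∧ ¬ MemPS p Ω μfam f) :
      ∃ (f : ℂ → ℂ) (g : ℕ → ℂ → ℂ),
        MemHClassical p Ω f ∧ ¬ MemPS p Ω μfam f ∧ (∀ n, MemPS p Ω μfam (g n)) ∧
        ∀ h : ℕ → ℂ → ℝ,
          (∀ n, IsLeastHarmMaj p Ω (fun z => g n z - f z) (h n)) →
          Filter.Tendsto (fun n => h n 0) Filter.atTop (nhds 0) := by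
  obtain ⟨f, ⟨hf, hm, hmh, hmaj⟩, hnps⟩ := hex
  have hbad : psNormPow p μfam f = ⊤ := by
    by_contra hne
    exact hnps ⟨hf, lt_top_iff_ne_top.2 hne⟩
  obtain ⟨Gh, hGha, hGhre⟩ := harm_pull cx.op cf hmh
  have hGh : DifferentiableOn ℂ Gh (ball 0 1) := hGha.differentiableOn
  have hF : DifferentiableOn ℂ (fun w => f (ψ w)) (ball 0 1) := hf.comp cf.dψ cf.mψ
  have hFm : ∀ w ∈ ball (0:ℂ) 1, ‖f (ψ w)‖ ^ p ≤ (Gh w).re := fun w hw => by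
    rw [hGhre w hw]; exact hmaj _ (cf.mψ w hw)
  have hGn : ∀ z ∈ Ω, ‖G z‖ < 1 := fun z hz => by simpa using cf.mG z hz
  set ρ : ℕ → ℝ := fun k => 1 - 1 / ((k:ℝ) + 1) with hρd
  have h1 : ∀ k, ρ k < 1 := fun k => by
    have : 0 < 1 / ((k:ℝ) + 1) := by positivity
    simp only [hρd]; linarith
  have h0 : ∀ k, 0 ≤ ρ k := fun k => by
    have : 1 / ((k:ℝ) + 1) ≤ 1 := by
      rw [div_le_one (by positivity)]; linarith [(Nat.cast_nonneg k : (0:ℝ) ≤ k)]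
    simp only [hρd]; linarith
  have hρ : Tendsto ρ atTop (𝓝 1) := by
    simpa [hρd] using (tendsto_one_div_add_atTop_nhds_zero_nat (𝕜 := ℝ)).const_sub 1
  obtain ⟨a, ha, hab⟩ := exists_bad cx cf hμ hp hf hbad h0 h1 hρ
  -- majorants
  have hmajor : ∀ a : ℕ → ℂ, Summable (fun k => ‖a k‖) → ∃ H, HarmonicOn H Ω ∧
      (∀ z ∈ Ω, ‖∑' k, a k * f (ψ (ρ k * G z))‖ ^ p ≤ H z) ∧
      H 0 = ((((∑' k, ‖a k‖) ^ (p - 1) : ℝ) : ℂ) *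
        ∑' k, ((‖a k‖ : ℝ) : ℂ) * Gh (ρ k * G 0)).re := by
    intro a ha
    have ha' : Summable fun k => ‖((‖a k‖ : ℝ) : ℂ)‖ := by simpa using ha
    refine ⟨fun z => ((((∑' k, ‖a k‖) ^ (p - 1) : ℝ) : ℂ) *
        ∑' k, ((‖a k‖ : ℝ) : ℂ) * Gh (ρ k * G z)).re, ?_, fun z hz => ?_, rfl⟩
    · refine harmonicOn_re (DifferentiableOn.analyticOnNhd ?_ cx.op)
      exact DifferentiableOn.const_mul ((disc_diff hGh h0 h1 ha').comp cf.dG cf.mG) _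
    · exact disc_major hp hF hGh hFm h0 h1 ha (hGn z hz)
  have hTd : DifferentiableOn ℂ (fun z => ∑' k, a k * f (ψ (ρ k * G z))) Ω :=
    (disc_diff hF h0 h1 ha).comp cf.dG cf.mG
  refine ⟨fun z => ∑' k, a k * f (ψ (ρ k * G z)),
    fun n z => ∑ k ∈ Finset.range n, a k * f (ψ (ρ k * G z)), ?_, ?_, ?_, ?_⟩
  · obtain ⟨H, hH1, hH2, _⟩ := hmajor a ha
    exact ⟨hTd, H, hH1, hH2⟩
  · intro h; exact h.2.ne hab
  · intro n
    refine ⟨?_, ?_⟩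
    · refine DifferentiableOn.fun_sum fun k _ => DifferentiableOn.const_mul ?_ _
      exact hF.comp (cf.dG.const_mul _) fun z hz => by
        simpa using (scale_norm h0 h1 k (G z)).trans_lt (hGn z hz)
    · choose B hB0 hB using fun k => disc_bdd hF (h1 k)
      refine bounded_ps cx hμ hp (c := ∑ k ∈ Finset.range n, ‖a k‖ * B k) fun z hz => ?_
      refine (norm_sum_le _ _).trans (Finset.sum_le_sum fun k _ => ?_)
      rw [norm_mul]
      refine mul_le_mul_of_nonneg_left (hB k _ ?_) (norm_nonneg _)
      rw [norm_mul, Complex.norm_real, Real.norm_of_nonneg (h0 k)]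
      exact mul_le_of_le_one_right (h0 k) (hGn z hz).le
  · intro h hh
    obtain ⟨B, hB0, hB⟩ := disc_bdd' hGh h0 h1 (hGn 0 cx.z0)
    set A := ∑' k, ‖a k‖ with hA
    have hA0 : 0 ≤ A := tsum_nonneg fun _ => norm_nonneg _
    have hlow : ∀ n, 0 ≤ h n 0 := fun n =>
      (Real.rpow_nonneg (norm_nonneg _) _).trans ((hh n).2.1 0 cx.z0)
    have hup : ∀ n, h n 0 ≤ A ^ (p - 1) * ((A - ∑ k ∈ Finset.range n, ‖a k‖) * B) := by
      intro n
      set a' : ℕ → ℂ := fun k => if k < n then 0 else a k with ha'd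
      have hle : ∀ k, ‖a' k‖ ≤ ‖a k‖ := fun k => by
        simp only [ha'd]; split_ifs <;> simp
      have ha' : Summable fun k => ‖a' k‖ := ha.of_nonneg_of_le (fun _ => norm_nonneg _) hle
      have hA' : ∑' k, ‖a' k‖ = A - ∑ k ∈ Finset.range n, ‖a k‖ := by
        rw [hA, ← ha.sum_add_tsum_nat_add n, ← ha'.sum_add_tsum_nat_add n]
        have e1 : ∑ k ∈ Finset.range n, ‖a' k‖ = 0 := Finset.sum_eq_zero fun k hk => by
          simp [ha'd, Finset.mem_range.1 hk]
        have e2 : ∀ k, a' (k + n) = a (k + n) := fun k => by simp [ha'd]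
        simp only [e1, e2]; ring
      obtain ⟨H, hH1, hH2, hH3⟩ := hmajor a' ha'
      refine ((hh n).2.2 H hH1 (fun z hz => ?_) 0 cx.z0).trans ?_
      · refine le_trans (le_of_eq ?_) (hH2 z hz)
        congr 1
        beta_reduce
        have hs := (disc_summable hF h0 h1 ha (hGn z hz)).of_norm
        have hs' := (disc_summable hF h0 h1 ha' (hGn z hz)).of_norm
        rw [← hs.sum_add_tsum_nat_add n, ← hs'.sum_add_tsum_nat_add n]
        have e1 : ∑ k ∈ Finset.range n, a' k * f (ψ (ρ k * G z)) = 0 :=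
          Finset.sum_eq_zero fun k hk => by simp [ha'd, Finset.mem_range.1 hk]
        have e2 : ∀ k, a' (k + n) = a (k + n) := fun k => by simp [ha'd]
        simp only [e1, e2]
        rw [zero_add, sub_add_cancel_left, norm_neg]
      · rw [hH3]
        have ha'' : Summable fun k => ‖((‖a' k‖ : ℝ) : ℂ)‖ := by simpa using ha'
        have hsG := disc_summable hGh h0 h1 ha'' (hGn 0 cx.z0)
        have hA'0 : 0 ≤ ∑' k, ‖a' k‖ := tsum_nonneg fun _ => norm_nonneg _
        refine (Complex.re_le_norm _).trans ?_
        rw [norm_mul, Complex.norm_real, Real.norm_of_nonneg (Real.rpow_nonneg hA'0 _), ← hA']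
        refine mul_le_mul (Real.rpow_le_rpow hA'0 (ha'.tsum_le_tsum hle ha) (by linarith)) ?_
          (norm_nonneg _) (Real.rpow_nonneg hA0 _)
        refine (norm_tsum_le_tsum_norm hsG).trans ?_
        rw [← tsum_mul_right]
        refine hsG.tsum_le_tsum (fun k => ?_) (ha'.mul_right B)
        rw [norm_mul]
        simp only [Complex.norm_real, norm_norm]
        exact mul_le_mul_of_nonneg_left (hB k _ le_rfl) (norm_nonneg _)
    have ht : Tendsto (fun n => A ^ (p - 1) * ((A - ∑ k ∈ Finset.range n, ‖a k‖) * B)) atTop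
        (𝓝 0) := by
      have := (((ha.hasSum.tendsto_sum_nat).const_sub A).mul_const B).const_mul (A ^ (p-1))
      simpa [hA] using this
    exact tendsto_of_tendsto_of_tendsto_of_le_of_le tendsto_const_nhds ht hlow hup


/-- `H^p_u(Ω) ⊆ H^p(Ω)`, the inclusion is continuous for the natural
norms, and if the spaces differ then the image of the inclusion is not closed in
`H^p(Ω)`: some `f ∈ H^p(Ω) ∖ H^p_u(Ω)` is an `H^p(Ω)`-norm limit of members of
`H^p_u(Ω)`. -/
theorem stmt7 (Ω : Set ℂ) (hΩ : AnalyticJordanDomain Ω)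
    (u : ℂ → ℝ) (hu : IsExhaustion u Ω)
    (ν : Measure ℂ) (hν : IsRieszMeasure u Ω ν) (hfin : ν Set.univ < ⊤)
    (μfam : ℝ → Measure ℂ) (hμ : ∀ r : ℝ, r < 0 → IsMAMeasure u Ω ν r (μfam r))
    (p : ℝ) (hp : 1 ≤ p) :
    (∀ f : ℂ → ℂ, MemPS p Ω μfam f → MemHClassical p Ω f) ∧
    (∃ C : ℝ, 0 < C ∧ ∀ (f : ℂ → ℂ) (h : ℂ → ℝ), MemPS p Ω μfam f →
      IsLeastHarmMaj p Ω f h →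
      ENNReal.ofReal ((h 0) ^ (1/p)) ≤ ENNReal.ofReal C * psNorm p μfam f) ∧
    ((∃ f : ℂ → ℂ, MemHClassical p Ω f ∧ ¬ MemPS p Ω μfam f) →
      ∃ (f : ℂ → ℂ) (g : ℕ → ℂ → ℂ),
        MemHClassical p Ω f ∧ ¬ MemPS p Ω μfam f ∧ (∀ n, MemPS p Ω μfam (g n)) ∧
        ∀ h : ℕ → ℂ → ℝ,
          (∀ n, IsLeastHarmMaj p Ω (fun z => g n z - f z) (h n)) →
          Filter.Tendsto (fun n => h n 0) Filter.atTop (nhds 0)) := by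
  have cx : Ctx Ω u ν := ⟨hΩ.isOpen, hΩ.zero_mem, hu, hν, hfin⟩
  obtain ⟨ψ, G, cf⟩ := exists_conf hΩ
  obtain ⟨C, hC, hmain⟩ := goal12 cx cf hμ hp
  refine ⟨fun f hf => ?_, ⟨C ^ (1/p), Real.rpow_pos_of_pos hC _, fun f h hf hh => ?_⟩,
    goal3 cx cf hμ hp⟩
  · obtain ⟨h, h1, h2, _⟩ := hmain f hf
    exact ⟨hf.1, h, h1, h2⟩
  · obtain ⟨h', h1, h2, h3⟩ := hmain f hf
    have h0 : 0 ≤ h 0 := (Real.rpow_nonneg (norm_nonneg _) _).trans (hh.2.1 0 cx.z0)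
    exact rpow_conv hp h0 hC hf.2 ((hh.2.2 h' h1 h2 0 cx.z0).trans h3)

end
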